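/- There exist constants η > 0 and C > 0 such that for every n, every prime p with 2 < p ≤ exp(η·n^{1/4}), and every λ ∈ F_p: |P[det_{F_p}(M_n − λ·I_n) = 0] − 1/p| ≤ C/p² + C·exp(−η·n/log p). -/

import Mathlib

open Finset

noncomputable section

/-- The sign `±1` associated to a Boolean. -/
def signb (R : Type*) [Ring R] (b : Bool) : R := if b then 1 else -1

open Classical in
/-- Uniform/counting probability of an event on a finite sample space. -/
def prob {Ω : Type*} [Fintype Ω] (E : Ω → Prop) : ℝ :=
  ((Finset.univ.filter E).card : ℝ) / (Fintype.card Ω : ℝ)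

/-- The symmetric random sign matrix determined by the Boolean data `ω`
(only the entries `ω i j` with `i ≤ j` are used); it is uniformly distributed
over symmetric `±1` matrices when `ω` is uniform. -/
def symMat (R : Type*) [Ring R] {n : ℕ} (ω : Fin n → Fin n → Bool) :
    Matrix (Fin n) (Fin n) R :=
  Matrix.of fun i j => signb R (ω (min i j) (max i j))

/-- Atom probability of a vector over `ZMod p` w.r.t. i.i.d. Rademacher signs. -/
def rho (p : ℕ) {ι : Type*} [Fintype ι] [DecidableEq ι] (w : ι → ZMod p) : ℝ :=
  ⨆ r : ZMod p, prob (fun ξ : ι → Bool => ∑ i, signb (ZMod p) (ξ i) * w i = r)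

/-- Discrepancy of a vector over `ZMod p` w.r.t. i.i.d. Rademacher signs. -/
def disc (p : ℕ) {ι : Type*} [Fintype ι] [DecidableEq ι] (w : ι → ZMod p) : ℝ :=
  ⨆ x : ZMod p,
    |prob (fun ξ : ι → Bool => ∑ i, signb (ZMod p) (ξ i) * w i = x) - 1 / (p : ℝ)|


/-! ### Characters -/

section chars

variable {p : ℕ} [Fact p.Prime]

def chi (x : ZMod p) : ℂ := ZMod.stdAddChar x
def cc (x : ZMod p) : ℝ := |(chi x).re|
def ss (x : ZMod p) : ℝ := (chi x).im ^ 2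

lemma chi_add (x y : ZMod p) : chi (x + y) = chi x * chi y := by
  simp [chi, AddChar.map_add_eq_mul]

lemma chi_zero : chi (0 : ZMod p) = 1 := by simp [chi]

lemma chi_norm (x : ZMod p) : ‖chi x‖ = 1 := by
  rw [chi, ZMod.stdAddChar_apply]; exact Circle.norm_coe _

lemma chi_re_im (x : ZMod p) : (chi x).re ^ 2 + (chi x).im ^ 2 = 1 := by
  have h := chi_norm x
  have h2 : Complex.normSq (chi x) = 1 := by rw [Complex.normSq_eq_norm_sq, h]; norm_num
  rw [Complex.normSq_apply] at h2
  nlinarith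

lemma chi_neg (x : ZMod p) : chi (-x) = (starRingEnd ℂ) (chi x) := by
  have h1 : chi (-x) * chi x = 1 := by rw [← chi_add]; simp [chi_zero]
  have h2 : (starRingEnd ℂ) (chi x) * chi x = 1 := by
    rw [mul_comm, Complex.mul_conj, Complex.normSq_eq_norm_sq, chi_norm]; norm_num
  have h3 : chi x ≠ 0 := by
    intro h; have := chi_norm x; rw [h] at this; simp at this
  exact mul_right_cancel₀ h3 (h1.trans h2.symm)

lemma chi_eq_one_iff (x : ZMod p) : chi x = 1 ↔ x = 0 := by
  constructor
  · intro h
    apply ZMod.injective_stdAddChar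
    simpa [chi] using h
  · rintro rfl; exact chi_zero

lemma ss_nonneg (x : ZMod p) : 0 ≤ ss x := sq_nonneg _
lemma ss_le_one (x : ZMod p) : ss x ≤ 1 := by
  have := chi_re_im x; unfold ss; nlinarith [sq_nonneg (chi x).re]
lemma ss_zero : ss (0 : ZMod p) = 0 := by simp [ss, chi_zero]
lemma ss_neg (x : ZMod p) : ss (-x) = ss x := by simp [ss, chi_neg]
lemma ss_add (x y : ZMod p) : ss (x + y) ≤ 2 * ss x + 2 * ss y := by
  unfold ss
  rw [chi_add, Complex.mul_im]
  have hx := chi_re_im x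
  have hy := chi_re_im y
  set a := (chi x).re
  set b := (chi x).im
  set c := (chi y).re
  set d := (chi y).im
  have h1 : a ^ 2 * d ^ 2 ≤ d ^ 2 := by nlinarith [mul_nonneg (sq_nonneg b) (sq_nonneg d)]
  have h2 : b ^ 2 * c ^ 2 ≤ b ^ 2 := by nlinarith [mul_nonneg (sq_nonneg b) (sq_nonneg d)]
  nlinarith [sq_nonneg (a * d - b * c)]

lemma cc_nonneg (x : ZMod p) : 0 ≤ cc x := abs_nonneg _
lemma cc_sq (x : ZMod p) : cc x ^ 2 = 1 - ss x := by
  unfold cc ss; rw [sq_abs]; have := chi_re_im x; linarith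
lemma cc_le_one (x : ZMod p) : cc x ≤ 1 := by
  have := cc_sq x; have := ss_nonneg x; have := cc_nonneg x; nlinarith
lemma cc_le_exp (x : ZMod p) : cc x ≤ Real.exp (-(ss x) / 2) := by
  have h := Real.add_one_le_exp (-(ss x))
  have h2 : Real.exp (-(ss x)) = Real.exp (-(ss x) / 2) ^ 2 := by
    rw [← Real.exp_nat_mul]; congr 1; push_cast; ring
  have h3 := cc_sq x
  exact le_of_sq_le_sq (by nlinarith) (Real.exp_pos _).le

lemma chi_two (x : ZMod p) : (chi (x + x)).re = 1 - 2 * ss x := by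
  rw [chi_add, Complex.mul_re]; have := chi_re_im x; unfold ss; nlinarith

lemma sum_chi_linear {W : Type*} [AddCommGroup W] [Module (ZMod p) W] [Fintype W]
    (L : W →ₗ[ZMod p] ZMod p) (hL : L ≠ 0) : ∑ w, chi (L w) = 0 := by
  obtain ⟨z, hz⟩ : ∃ z, L z ≠ 0 := by
    by_contra! h; exact hL (LinearMap.ext h)
  have h1 : ∑ w, chi (L w) = chi (L z) * ∑ w, chi (L w) := by
    rw [Finset.mul_sum, ← Equiv.sum_comp (Equiv.addRight z)]
    refine Finset.sum_congr rfl fun w _ => ?_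
    simp [chi_add, mul_comm]
  have h2 : chi (L z) ≠ 1 := by rwa [Ne, chi_eq_one_iff]
  have h3 : (1 - chi (L z)) * ∑ w, chi (L w) = 0 := by rw [sub_mul, ← h1]; simp
  rcases mul_eq_zero.1 h3 with h | h
  · exact absurd (sub_eq_zero.1 h).symm h2
  · exact h

lemma two_ne_zero_zmod (hp : 2 < p) : (2 : ZMod p) ≠ 0 := by
  intro h
  have : ((2 : ℕ) : ZMod p) = 0 := by exact_mod_cast h
  rw [ZMod.natCast_eq_zero_iff] at this
  exact absurd (Nat.le_of_dvd (by norm_num) this) (by omega)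

lemma sum_ss_linear (hp : 2 < p) {W : Type*} [AddCommGroup W] [Module (ZMod p) W] [Fintype W]
    (L : W →ₗ[ZMod p] ZMod p) (hL : L ≠ 0) : ∑ w, ss (L w) = (Fintype.card W : ℝ) / 2 := by
  have hL2 : (2 : ZMod p) • L ≠ 0 := smul_ne_zero (two_ne_zero_zmod hp) hL
  have h := congrArg Complex.re (sum_chi_linear _ hL2)
  rw [Complex.re_sum] at h
  have h2 : ∀ w, (chi (((2 : ZMod p) • L) w)).re = 1 - 2 * ss (L w) := by
    intro w; rw [← chi_two]; simp [two_mul]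
  simp_rw [h2] at h
  rw [Finset.sum_sub_distrib, ← Finset.mul_sum] at h
  simp at h
  linarith

lemma sum_cc_linear (hp : 2 < p) {W : Type*} [AddCommGroup W] [Module (ZMod p) W] [Fintype W]
    (L : W →ₗ[ZMod p] ZMod p) (hL : L ≠ 0) : ∑ w, cc (L w) ≤ 3 / 4 * (Fintype.card W : ℝ) := by
  have h := sum_ss_linear hp L hL
  have h1 : ∀ w, cc (L w) ≤ 2 / 3 * (1 - ss (L w)) + 3 / 8 := by
    intro w; rw [← cc_sq]; nlinarith [sq_nonneg (cc (L w) - 3 / 4)]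
  calc ∑ w, cc (L w) ≤ ∑ w, (2 / 3 * (1 - ss (L w)) + 3 / 8) := Finset.sum_le_sum fun w _ => h1 w
    _ = 2 / 3 * ((Fintype.card W : ℝ) - ∑ w, ss (L w)) + 3 / 8 * Fintype.card W := by
        rw [Finset.sum_add_distrib, ← Finset.mul_sum, Finset.sum_sub_distrib]; simp; ring
    _ ≤ _ := by
        rw [h]; have : (0 : ℝ) ≤ Fintype.card W := by positivity
        linarith

end chars

/-! ### Growth -/

section growth

variable {V : Type*} [AddCommGroup V] [Fintype V]

open Classical in
def lev {V : Type*} [Fintype V] (E : V → ℝ) (r : ℝ) : Finset V := Finset.univ.filter fun b => E b ≤ r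

lemma mem_lev {V : Type*} [Fintype V] {E : V → ℝ} {r : ℝ} {b : V} : b ∈ lev E r ↔ E b ≤ r := by simp [lev]

lemma growth_step (E : V → ℝ) (h0 : E 0 = 0) (hneg : ∀ b, E (-b) = E b)
    (hadd : ∀ b c, E (b + c) ≤ 2 * E b + 2 * E c) (r : ℝ) (hr : 0 ≤ r) :
    (3 / 2 : ℝ) * (lev E r).card ≤ (lev E (4 * r)).card ∨
      ∃ H : AddSubgroup V, (∀ b, E b ≤ r → b ∈ H) ∧ (∀ b ∈ H, E b ≤ 4 * r) := by
  classical
  by_cases h : (3 / 2 : ℝ) * (lev E r).card ≤ (lev E (4 * r)).card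
  · exact Or.inl h
  right
  push Not at h
  set D := lev E r with hD
  have hDneg : ∀ b ∈ D, -b ∈ D := by intro b hb; rw [hD, mem_lev] at *; rwa [hneg]
  have hD0 : (0 : V) ∈ D := by rw [hD, mem_lev, h0]; exact hr
  have hsum : ∀ b ∈ D, ∀ c ∈ D, b + c ∈ lev E (4 * r) := by
    intro b hb c hc
    rw [hD, mem_lev] at hb hc
    rw [mem_lev]
    have := hadd b c
    linarith
  -- representation count
  have hrep : ∀ a ∈ D, ∀ b ∈ D, D.card < 2 * (D.filter fun v => a + b + v ∈ D).card := by
    intro a ha b hb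
    have e1 : (D.image fun v => a + b + v) = D.image fun v => (a + b) + v := rfl
    have hu : ((D.image fun v => a + v) ∪ (D.image fun v => -b + v)) ⊆ lev E (4 * r) := by
      intro x hx
      rw [Finset.mem_union, Finset.mem_image, Finset.mem_image] at hx
      rcases hx with ⟨v, hv, rfl⟩ | ⟨v, hv, rfl⟩
      · exact hsum _ ha _ hv
      · exact hsum _ (hDneg _ hb) _ hv
    have h1 := Finset.card_le_card hu
    have h2 := Finset.card_union_add_card_inter (D.image fun v => a + v) (D.image fun v => -b + v)
    rw [Finset.card_image_of_injective _ (add_right_injective a),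
      Finset.card_image_of_injective _ (add_right_injective (-b))] at h2
    have h3 : ((D.image fun v => a + v) ∩ (D.image fun v => -b + v)).card
        ≤ (D.filter fun v => a + b + v ∈ D).card := by
      refine Finset.card_le_card_of_injOn (fun x => -a + x) ?_ ?_
      · intro x hx
        rw [Finset.mem_coe, Finset.mem_inter, Finset.mem_image, Finset.mem_image] at hx
        obtain ⟨⟨v, hv, hvx⟩, ⟨w, hw, hwx⟩⟩ := hx
        rw [Finset.mem_coe, Finset.mem_filter]
        constructor
        · rw [← hvx]; simpa using hv
        · have : a + b + (-a + x) = w := by rw [← hwx]; abel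
          rw [this]; exact hw
      · intro x _ y _ hxy; simpa using hxy
    have h4 : (2 * (lev E (4 * r)).card : ℝ) < 3 * D.card := by linarith
    have h5 : 2 * (lev E (4 * r)).card < 3 * D.card := by exact_mod_cast h4
    omega
  refine ⟨{ carrier := {x | ∃ a ∈ D, ∃ b ∈ D, x = a + b}
            add_mem' := ?_, zero_mem' := ⟨0, hD0, 0, hD0, by simp⟩, neg_mem' := ?_ }, ?_, ?_⟩
  · rintro x y ⟨a, ha, b, hb, rfl⟩ ⟨c, hc, d, hd, rfl⟩
    have h1 := hrep a ha b hb
    have h2 := hrep (-c) (hDneg _ hc) (-d) (hDneg _ hd)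
    obtain ⟨v, hv⟩ : ((D.filter fun v => a + b + v ∈ D) ∩ (D.filter fun v => -c + -d + v ∈ D)).Nonempty := by
      rw [← Finset.card_pos]
      have h3 := Finset.card_union_add_card_inter (D.filter fun v => a + b + v ∈ D) (D.filter fun v => -c + -d + v ∈ D)
      have h4 : ((D.filter fun v => a + b + v ∈ D) ∪ (D.filter fun v => -c + -d + v ∈ D)).card ≤ D.card :=
        Finset.card_le_card (Finset.union_subset (Finset.filter_subset _ _) (Finset.filter_subset _ _))
      omega
    rw [Finset.mem_inter, Finset.mem_filter, Finset.mem_filter] at hv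
    refine ⟨a + b + v, hv.1.2, -(-c + -d + v), hDneg _ hv.2.2, by abel⟩
  · rintro x ⟨a, ha, b, hb, rfl⟩
    exact ⟨-a, hDneg _ ha, -b, hDneg _ hb, by abel⟩
  · intro b hb
    exact ⟨b, by rw [hD, mem_lev]; exact hb, 0, hD0, by simp⟩
  · rintro x ⟨a, ha, b, hb, rfl⟩
    exact mem_lev.1 (hsum a ha b hb)

lemma growth (E : V → ℝ) (h0 : E 0 = 0) (hneg : ∀ b, E (-b) = E b)
    (hadd : ∀ b c, E (b + c) ≤ 2 * E b + 2 * E c) (r : ℝ) (hr : 0 ≤ r) (t : ℕ) :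
    (3 / 2 : ℝ) ^ t * (lev E r).card ≤ (lev E (4 ^ t * r)).card ∨
      ∃ H : AddSubgroup V, (∀ b, E b ≤ r → b ∈ H) ∧ (∀ b ∈ H, E b ≤ 4 ^ t * r) := by
  induction t with
  | zero => left; simp
  | succ t ih =>
    have h4 : (1 : ℝ) ≤ 4 ^ t := one_le_pow₀ (by norm_num)
    have hm : 4 ^ t * r ≤ 4 ^ (t + 1) * r := by
      rw [pow_succ]; nlinarith
    have hm2 : r ≤ 4 ^ t * r := by nlinarith
    rcases ih with ih | ⟨H, h1, h2⟩
    · rcases growth_step E h0 hneg hadd (4 ^ t * r) (by positivity) with h | ⟨H, h1, h2⟩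
      · left
        have e : (4 : ℝ) ^ (t + 1) * r = 4 * (4 ^ t * r) := by rw [pow_succ]; ring
        rw [e, pow_succ]; linarith
      · right
        refine ⟨H, fun b hb => h1 b (hb.trans hm2), fun b hb => (h2 b hb).trans (le_of_eq ?_)⟩
        rw [pow_succ]; ring
    · right; exact ⟨H, h1, fun b hb => (h2 b hb).trans hm⟩

end growth



/-! ### Counting -/

section counting

open Classical in
lemma count_exc {ι V : Type*} [Fintype ι] [Fintype V] [Nonempty V] (S : ι → Finset V)
    (hS : ∀ i, (S i).Nonempty) (e : ℕ) :
    ((univ.filter fun x : ι → V => (univ.filter fun i => x i ∉ S i).card ≤ e).card : ℝ)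
      ≤ 2 ^ Fintype.card ι * (Fintype.card V : ℝ) ^ e * ∏ i, ((S i).card : ℝ) := by
  have hsub : (univ.filter fun x : ι → V => (univ.filter fun i => x i ∉ S i).card ≤ e)
      ⊆ ((univ : Finset (Finset ι)).filter fun X => X.card ≤ e).biUnion
        fun X => Fintype.piFinset fun i => if i ∈ X then univ else S i := by
    intro x hx
    rw [mem_filter] at hx
    rw [mem_biUnion]
    refine ⟨univ.filter fun i => x i ∉ S i, by simpa using hx.2, ?_⟩
    rw [Fintype.mem_piFinset]
    intro i
    by_cases h : x i ∈ S i <;> simp [h]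
  have h1 : ∀ X ∈ ((univ : Finset (Finset ι)).filter fun X => X.card ≤ e),
      ((Fintype.piFinset fun i => if i ∈ X then univ else S i).card : ℝ)
        ≤ (Fintype.card V : ℝ) ^ e * ∏ i, ((S i).card : ℝ) := by
    intro X hX
    rw [mem_filter] at hX
    rw [Fintype.card_piFinset]
    push_cast
    have hV : (1 : ℝ) ≤ Fintype.card V := by exact_mod_cast Fintype.card_pos
    calc (∏ i, ((if i ∈ X then univ else S i : Finset V).card : ℝ))
        ≤ ∏ i, ((if i ∈ X then (Fintype.card V : ℝ) else 1) * ((S i).card : ℝ)) := by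
          apply Finset.prod_le_prod
          · intro i _; positivity
          · intro i _
            have : (1 : ℝ) ≤ (S i).card := by exact_mod_cast (hS i).card_pos
            split_ifs
            · simp only [Finset.card_univ]; nlinarith
            · simp
      _ = (Fintype.card V : ℝ) ^ X.card * ∏ i, ((S i).card : ℝ) := by
          rw [Finset.prod_mul_distrib, Finset.prod_ite_mem, Finset.univ_inter, Finset.prod_const]
      _ ≤ _ := by
          exact mul_le_mul_of_nonneg_right (pow_le_pow_right₀ hV hX.2)
            (Finset.prod_nonneg fun i _ => by positivity)
  calc ((univ.filter fun x : ι → V => (univ.filter fun i => x i ∉ S i).card ≤ e).card : ℝ)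
      ≤ ∑ X ∈ ((univ : Finset (Finset ι)).filter fun X => X.card ≤ e),
        ((Fintype.piFinset fun i => if i ∈ X then univ else S i).card : ℝ) := by
        exact_mod_cast (Finset.card_le_card hsub).trans Finset.card_biUnion_le
    _ ≤ ∑ X ∈ ((univ : Finset (Finset ι)).filter fun X => X.card ≤ e),
        ((Fintype.card V : ℝ) ^ e * ∏ i, ((S i).card : ℝ)) := Finset.sum_le_sum h1
    _ = ((univ : Finset (Finset ι)).filter fun X => X.card ≤ e).card *
        ((Fintype.card V : ℝ) ^ e * ∏ i, ((S i).card : ℝ)) := by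
        rw [Finset.sum_const, nsmul_eq_mul]
    _ ≤ 2 ^ Fintype.card ι * ((Fintype.card V : ℝ) ^ e * ∏ i, ((S i).card : ℝ)) := by
        gcongr
        have := Finset.card_filter_le (univ : Finset (Finset ι)) (fun X => X.card ≤ e)
        rw [Finset.card_univ, Fintype.card_finset] at this
        exact_mod_cast this
    _ = _ := by ring

/-- Markov-type counting. -/
lemma card_mul_le_sum {ι : Type*} (s : Finset ι) (f : ι → ℝ) (hf : ∀ i, 0 ≤ f i) (r : ℝ)
    (P : ι → Prop) [DecidablePred P] (hP : ∀ i, P i → r ≤ f i) :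
    ((s.filter P).card : ℝ) * r ≤ ∑ i ∈ s, f i := by
  calc ((s.filter P).card : ℝ) * r = ∑ i ∈ s.filter P, r := by rw [sum_const, nsmul_eq_mul]
    _ ≤ ∑ i ∈ s.filter P, f i := sum_le_sum fun i hi => hP i (mem_filter.1 hi).2
    _ ≤ ∑ i ∈ s, f i := sum_le_sum_of_subset_of_nonneg (filter_subset _ _) fun i _ _ => hf i

lemma sampling {V : Type*} [Fintype V] (g : V → V → ℝ) (g0 : ∀ x y, 0 ≤ g x y)
    (g1 : ∀ x y, g x y ≤ 1) (D : Finset V) (hD : D.Nonempty) (l : ℕ)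
    (hl : (Fintype.card V : ℝ) * Real.exp (-(l : ℝ) / 16) < 1) :
    ∃ c : Fin l → V, (∀ k, c k ∈ D) ∧ ∀ x, ∑ k, g x (c k) ≤ (l : ℝ) / 16 →
      ∑ y ∈ D, g x y ≤ (D.card : ℝ) / 4 := by
  classical
  by_contra! hcon
  have hDc : (0 : ℝ) < D.card := by exact_mod_cast hD.card_pos
  set bad := univ.filter fun x => (D.card : ℝ) / 4 < ∑ y ∈ D, g x y
  have h1 : ∀ c ∈ Fintype.piFinset fun _ : Fin l => D,
      (1 : ℝ) ≤ ∑ x ∈ bad, Real.exp ((l : ℝ) / 16) * ∏ k, Real.exp (-g x (c k)) := by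
    intro c hc
    rw [Fintype.mem_piFinset] at hc
    obtain ⟨x, hx1, hx2⟩ := hcon c hc
    have hx : x ∈ bad := by simp [bad, hx2]
    refine le_trans ?_ (Finset.single_le_sum (f := fun x => Real.exp ((l : ℝ) / 16) * ∏ k, Real.exp (-g x (c k))) ?_ hx)
    · rw [← Real.exp_sum, ← Real.exp_add]
      apply Real.one_le_exp
      rw [Finset.sum_neg_distrib]; linarith
    · intro i _; positivity
  have h2 := Finset.sum_le_sum h1
  rw [Finset.sum_const, Fintype.card_piFinset, Finset.sum_comm] at h2
  simp only [Finset.prod_const, Finset.card_univ, Fintype.card_fin, nsmul_eq_mul, mul_one, Nat.cast_pow] at h2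
  have h3 : ∀ x ∈ bad, ∑ c ∈ Fintype.piFinset (fun _ : Fin l => D),
      Real.exp ((l : ℝ) / 16) * ∏ k, Real.exp (-g x (c k)) ≤ (D.card : ℝ) ^ l * Real.exp (-(l : ℝ) / 16) := by
    intro x hx
    rw [← Finset.mul_sum, ← Finset.prod_univ_sum (fun _ : Fin l => D) (fun _ y => Real.exp (-g x y))]
    simp only [Finset.prod_const, Finset.card_univ, Fintype.card_fin]
    have hx' : (D.card : ℝ) / 4 < ∑ y ∈ D, g x y := by simpa [bad] using hx
    have h4 : ∑ y ∈ D, Real.exp (-g x y) ≤ D.card * Real.exp (-1 / 8) := by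
      have h5 : ∀ y ∈ D, Real.exp (-g x y) ≤ 1 - g x y / 2 := by
        intro y _
        have ha := g0 x y
        have hb := g1 x y
        have hc := Real.add_one_le_exp (g x y)
        rw [Real.exp_neg, inv_le_iff_one_le_mul₀ (Real.exp_pos _)]
        nlinarith
      have h6 := Finset.sum_le_sum h5
      rw [Finset.sum_sub_distrib, ← Finset.sum_div] at h6
      simp at h6
      have h7 := Real.add_one_le_exp (-1 / 8 : ℝ)
      nlinarith
    calc Real.exp ((l : ℝ) / 16) * (∑ y ∈ D, Real.exp (-g x y)) ^ l
        ≤ Real.exp ((l : ℝ) / 16) * (D.card * Real.exp (-1 / 8)) ^ l := by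
          gcongr
      _ = (D.card : ℝ) ^ l * (Real.exp ((l : ℝ) / 16) * Real.exp (-1 / 8) ^ l) := by
          rw [mul_pow]; ring
      _ = _ := by
          rw [← Real.exp_nat_mul, ← Real.exp_add]; congr 2; ring
  have h4 := h2.trans (Finset.sum_le_sum h3)
  rw [Finset.sum_const, nsmul_eq_mul] at h4
  have h5 : (bad.card : ℝ) ≤ Fintype.card V := by exact_mod_cast Finset.card_le_univ bad
  have h6 : (0 : ℝ) < (D.card : ℝ) ^ l := by positivity
  have h7 : (bad.card : ℝ) * ((D.card : ℝ) ^ l * Real.exp (-(l : ℝ) / 16))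
      ≤ (D.card : ℝ) ^ l * (Fintype.card V * Real.exp (-(l : ℝ) / 16)) := by
    have := mul_le_mul_of_nonneg_right h5 (by positivity : 0 ≤ (D.card : ℝ) ^ l * Real.exp (-(l : ℝ) / 16))
    linarith
  nlinarith

end counting

section parseval

variable {p : ℕ} [Fact p.Prime] {V : Type*} [AddCommGroup V] [Module (ZMod p) V] [Fintype V]

lemma parseval_bound (hp : 2 < p) (B : LinearMap.BilinForm (ZMod p) V) (hB : ∀ y, (∀ x, B x y = 0) → y = 0)
    (D S : Finset V) (hS : ∀ x ∈ S, ∑ y ∈ D, ss (B x y) ≤ (D.card : ℝ) / 4) :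
    (D.card : ℝ) * S.card ≤ 4 * Fintype.card V := by
  classical
  rcases D.eq_empty_or_nonempty with rfl | hD
  · simp
  have hDc : (0 : ℝ) < D.card := by exact_mod_cast hD.card_pos
  set F : V → ℂ := fun x => ∑ y ∈ D, chi (B x y + B x y)
  have key : ∑ x, ‖F x‖ ^ 2 = (Fintype.card V : ℝ) * D.card := by
    have h1 : ∀ x, ((‖F x‖ ^ 2 : ℝ) : ℂ) = ∑ y ∈ D, ∑ z ∈ D, chi ((2 : ZMod p) * B x (y - z)) := by
      intro x
      rw [← Complex.normSq_eq_norm_sq, ← Complex.mul_conj, map_sum, Finset.sum_mul_sum]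
      refine sum_congr rfl fun y _ => sum_congr rfl fun z _ => ?_
      rw [← chi_neg, ← chi_add]
      congr 1
      rw [map_sub]; ring
    have h2 : ((∑ x, ‖F x‖ ^ 2 : ℝ) : ℂ) = ((Fintype.card V : ℝ) * D.card : ℝ) := by
      push_cast
      have h3 : ∀ x, ((‖F x‖ : ℂ) ^ 2) = ∑ y ∈ D, ∑ z ∈ D, chi ((2 : ZMod p) * B x (y - z)) := by
        intro x; rw [← h1]; push_cast; rfl
      simp_rw [h3]
      rw [Finset.sum_comm]
      have h4 : ∀ y ∈ D, ∑ x, ∑ z ∈ D, chi ((2 : ZMod p) * B x (y - z)) = (Fintype.card V : ℂ) := by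
        intro y hy
        rw [Finset.sum_comm, Finset.sum_eq_single_of_mem y hy]
        · simp [chi_zero]
        · intro z _ hzy
          have := sum_chi_linear ((2 : ZMod p) • (B.flip (y - z))) (by
            apply smul_ne_zero (two_ne_zero_zmod hp)
            intro h
            apply hzy
            have h5 := hB (y - z) (fun x => by
              have := LinearMap.congr_fun h x
              simpa using this)
            exact (sub_eq_zero.1 h5).symm)
          simpa using this
      rw [Finset.sum_congr rfl h4]
      simp [mul_comm]
    exact_mod_cast h2
  have hlow : ∀ x ∈ S, (D.card : ℝ) ^ 2 / 4 ≤ ‖F x‖ ^ 2 := by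
    intro x hx
    have h1 : (F x).re = D.card - 2 * ∑ y ∈ D, ss (B x y) := by
      simp only [F, Complex.re_sum, chi_two, Finset.sum_sub_distrib, ← Finset.mul_sum]
      simp
    have h2 := hS x hx
    have h3 := Complex.abs_re_le_norm (F x)
    have h4 := le_abs_self (F x).re
    have h5 : (D.card : ℝ) / 2 ≤ ‖F x‖ := by linarith
    nlinarith
  have h1 : (S.card : ℝ) * ((D.card : ℝ) ^ 2 / 4) ≤ (Fintype.card V : ℝ) * D.card := by
    rw [← key, ← nsmul_eq_mul, ← Finset.sum_const]
    exact (Finset.sum_le_sum hlow).trans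
      (Finset.sum_le_sum_of_subset_of_nonneg (Finset.subset_univ S) fun i _ _ => by positivity)
  have h2 : (D.card : ℝ) * (D.card * S.card) ≤ D.card * (4 * Fintype.card V) := by nlinarith
  exact le_of_mul_le_mul_left h2 hDc

end parseval



section soft

set_option linter.unusedSectionVars false

variable {p : ℕ} [Fact p.Prime] {V : Type*} [AddCommGroup V] [Module (ZMod p) V] [Fintype V]

def En (B : LinearMap.BilinForm (ZMod p) V) {R : Type*} [Fintype R] (a : R → V) (b : V) : ℝ :=
  ∑ i, ss (B (a i) b)

lemma En_nonneg (B : LinearMap.BilinForm (ZMod p) V) {R : Type*} [Fintype R] (a : R → V) (b : V) :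
    0 ≤ En B a b := Finset.sum_nonneg fun _ _ => ss_nonneg _

lemma En_zero (B : LinearMap.BilinForm (ZMod p) V) {R : Type*} [Fintype R] (a : R → V) :
    En B a 0 = 0 := by simp [En, ss_zero]

lemma En_neg (B : LinearMap.BilinForm (ZMod p) V) {R : Type*} [Fintype R] (a : R → V) (b : V) :
    En B a (-b) = En B a b := by simp [En, ss_neg]

lemma En_add (B : LinearMap.BilinForm (ZMod p) V) {R : Type*} [Fintype R] (a : R → V) (b c : V) :
    En B a (b + c) ≤ 2 * En B a b + 2 * En B a c := by
  unfold En
  rw [Finset.mul_sum, Finset.mul_sum, ← Finset.sum_add_distrib]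
  refine Finset.sum_le_sum fun i _ => ?_
  rw [map_add]; exact ss_add _ _

open Classical in
def Good (B : LinearMap.BilinForm (ZMod p) V) (e : ℕ) {R₁ R₂ : Type*} [Fintype R₁] [Fintype R₂]
    (a : R₁ → V) (b : R₂ → V) : Prop :=
  ∃ H : Submodule (ZMod p) V, (univ.filter fun i => a i ∉ B.orthogonal H).card ≤ e ∧
    (univ.filter fun j => b j ∉ H).card ≤ e

open Classical in
lemma sum_lev_pow (hp : 2 < p) (B : LinearMap.BilinForm (ZMod p) V)
    (hB : ∀ y, (∀ x, B x y = 0) → y = 0) {R : Type*} [Fintype R] (N : ℕ) (hN : Fintype.card R = N)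
    (r : ℝ) (hr : 0 ≤ r) (e l : ℕ) (hre : 16 * r ≤ e)
    (hl : (Fintype.card V : ℝ) * Real.exp (-(l : ℝ) / 16) < 1) :
    ∑ a : R → V, ((lev (En B a) r).card : ℝ) ^ N
      ≤ (Fintype.card V : ℝ) ^ l * (2 ^ N * (Fintype.card V : ℝ) ^ e * (4 * Fintype.card V) ^ N) := by
  have hV : (1 : ℝ) ≤ Fintype.card V := by
    have : Nonempty V := ⟨0⟩
    exact_mod_cast Fintype.card_pos
  have hl0 : 0 < l := by
    rcases Nat.eq_zero_or_pos l with h | h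
    · rw [h] at hl; simp at hl
    · exact h
  have hlR : (0 : ℝ) < l := by exact_mod_cast hl0
  set S : (Fin l → V) → Finset V := fun c => univ.filter fun x => ∑ k, ss (B x (c k)) ≤ (l : ℝ) / 16 with hSdef
  have hS0 : ∀ c, (0 : V) ∈ S c := by
    intro c; simp [hSdef, ss_zero]; positivity
  have hSne : ∀ c, (S c).Nonempty := fun c => ⟨0, hS0 c⟩
  have hSpos : ∀ c, (0 : ℝ) < (S c).card := fun c => by exact_mod_cast (hSne c).card_pos
  have h1 : ∀ a : R → V, ((lev (En B a) r).card : ℝ) ^ N ≤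
      ∑ c : Fin l → V, if (univ.filter fun i => a i ∉ S c).card ≤ e then
        (4 * (Fintype.card V : ℝ) / (S c).card) ^ N else 0 := by
    intro a
    have hne : (lev (En B a) r).Nonempty := ⟨0, by rw [mem_lev, En_zero]; exact hr⟩
    obtain ⟨c, hc1, hc2⟩ := sampling (fun x y => ss (B x y)) (fun _ _ => ss_nonneg _)
      (fun _ _ => ss_le_one _) (lev (En B a) r) hne l hl
    have hpar := parseval_bound hp B hB (lev (En B a) r) (S c) (fun x hx => hc2 x (by simpa [hSdef] using hx))
    have hcard : (univ.filter fun i => a i ∉ S c).card ≤ e := by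
      have hm := card_mul_le_sum univ (fun i => ∑ k, ss (B (a i) (c k)))
        (fun i => Finset.sum_nonneg fun _ _ => ss_nonneg _) ((l : ℝ) / 16) (fun i => a i ∉ S c)
        (fun i hi => by
          have : ¬ ∑ k, ss (B (a i) (c k)) ≤ (l : ℝ) / 16 := by simpa [hSdef] using hi
          exact (not_le.1 this).le)
      rw [Finset.sum_comm] at hm
      have hm2 : ∑ k : Fin l, ∑ i, ss (B (a i) (c k)) ≤ ∑ k : Fin l, r :=
        Finset.sum_le_sum fun k _ => (mem_lev (E := En B a)).1 (hc1 k)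
      simp at hm2
      have hm3 : ((univ.filter fun i => a i ∉ S c).card : ℝ) * ((l : ℝ) / 16) ≤ e * (l / 16) := by
        have : (l : ℝ) * (16 * r) ≤ l * e := mul_le_mul_of_nonneg_left hre hlR.le
        calc _ ≤ l * r := hm.trans hm2
          _ ≤ _ := by linarith
      have := le_of_mul_le_mul_right hm3 (by positivity)
      exact_mod_cast this
    refine le_trans ?_ (Finset.single_le_sum (f := fun c => if (univ.filter fun i => a i ∉ S c).card ≤ e then
        (4 * (Fintype.card V : ℝ) / (S c).card) ^ N else 0) (fun c _ => by split_ifs <;> positivity) (mem_univ c))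
    simp only [hcard, if_true]
    apply pow_le_pow_left₀ (by positivity)
    rw [le_div_iff₀ (hSpos c)]
    exact hpar
  refine (Finset.sum_le_sum fun a _ => h1 a).trans ?_
  rw [Finset.sum_comm]
  have h2 : ∀ c ∈ (univ : Finset (Fin l → V)), (∑ a : R → V, if (univ.filter fun i => a i ∉ S c).card ≤ e then
        (4 * (Fintype.card V : ℝ) / (S c).card) ^ N else 0) ≤
        2 ^ N * (Fintype.card V : ℝ) ^ e * (4 * Fintype.card V) ^ N := by
    intro c _
    rw [← Finset.sum_filter, Finset.sum_const, nsmul_eq_mul]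
    have : Nonempty V := ⟨0⟩
    have h3 := count_exc (fun _ : R => S c) (fun _ => hSne c) e
    rw [Finset.prod_const, Finset.card_univ, hN] at h3
    calc _ ≤ (2 ^ N * (Fintype.card V : ℝ) ^ e * ((S c).card : ℝ) ^ N) *
          (4 * (Fintype.card V : ℝ) / (S c).card) ^ N := by gcongr
      _ = 2 ^ N * (Fintype.card V : ℝ) ^ e * (((S c).card : ℝ) * (4 * (Fintype.card V : ℝ) / (S c).card)) ^ N := by
          rw [mul_pow]; ring
      _ = _ := by
          rw [mul_div_cancel₀ _ (hSpos c).ne']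
  refine (Finset.sum_le_sum h2).trans ?_
  rw [Finset.sum_const, nsmul_eq_mul]
  simp

open Classical in
lemma good_of_subgroup (hp : 2 < p) (B : LinearMap.BilinForm (ZMod p) V)
    (hsymm : ∀ x y, B x y = B y x) {R : Type*} [Fintype R] (a : R → V) (H : Submodule (ZMod p) V)
    (r : ℝ) (e : ℕ) (hre : 2 * r ≤ e) (hH : ∀ b ∈ H, En B a b ≤ r) :
    (univ.filter fun i => a i ∉ B.orthogonal H).card ≤ e := by
  have hc : (0 : ℝ) < Fintype.card H := by exact_mod_cast Fintype.card_pos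
  have h1 : ∑ i, ∑ b : H, ss (B (a i) b) ≤ Fintype.card H * r := by
    rw [Finset.sum_comm, ← nsmul_eq_mul, ← Finset.card_univ, ← Finset.sum_const]
    exact Finset.sum_le_sum fun b _ => hH b b.2
  have h2 := card_mul_le_sum univ (fun i => ∑ b : H, ss (B (a i) b))
    (fun i => Finset.sum_nonneg fun _ _ => ss_nonneg _) ((Fintype.card H : ℝ) / 2)
    (fun i => a i ∉ B.orthogonal H) (fun i hi => by
      have := sum_ss_linear hp ((B (a i)).comp H.subtype) (by
        intro h0
        apply hi
        rw [LinearMap.BilinForm.mem_orthogonal_iff]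
        intro n hn
        have := LinearMap.congr_fun h0 ⟨n, hn⟩
        show B n (a i) = 0
        rw [hsymm]; simpa using this)
      simp at this
      simp [this])
  have h3 := h2.trans h1
  have h4 : (((univ.filter fun i => a i ∉ B.orthogonal H).card : ℝ)) * (Fintype.card H / 2) ≤ e * (Fintype.card H / 2) := by
    nlinarith
  exact_mod_cast le_of_mul_le_mul_right h4 (by positivity)

open Classical in
lemma soft (hp : 2 < p) (B : LinearMap.BilinForm (ZMod p) V) (hsymm : ∀ x y, B x y = B y x)
    (hB : ∀ y, (∀ x, B x y = 0) → y = 0) {R₁ R₂ : Type*} [Fintype R₁] [Fintype R₂] (N : ℕ)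
    (h₁ : Fintype.card R₁ = N) (h₂ : Fintype.card R₂ = N)
    (T r : ℝ) (hr : 0 < r) (t e l : ℕ) (hTe : T ≤ e * r) (hre : 16 * (4 ^ t * r) ≤ e)
    (hl : (Fintype.card V : ℝ) * Real.exp (-(l : ℝ) / 16) < 1) :
    ∑ a : R₁ → V, ∑ b : R₂ → V, (if Good B e a b then 0 else ∏ i, ∏ j, cc (B (a i) (b j)))
      ≤ (Fintype.card V : ℝ) ^ (2 * N) * Real.exp (-T / 2) +
        (16 / (3 / 2) ^ t) ^ N * (Fintype.card V : ℝ) ^ (N + 2 * e + l) := by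
  have hV1 : Nonempty V := ⟨0⟩
  have hcard : ∀ a : R₁ → V, ∀ b : R₂ → V, ∑ j, En B a (b j) ≤ T →
      (univ.filter fun j => b j ∉ lev (En B a) r).card ≤ e := by
    intro a b hT
    have hm := card_mul_le_sum univ (fun j => En B a (b j)) (fun j => En_nonneg _ _ _) r
      (fun j => b j ∉ lev (En B a) r) (fun j hj => by rw [mem_lev] at hj; exact (not_le.1 hj).le)
    exact_mod_cast le_of_mul_le_mul_right (hm.trans (hT.trans hTe)) hr
  have hpt : ∀ a : R₁ → V, ∀ b : R₂ → V,
      (if Good B e a b then 0 else ∏ i, ∏ j, cc (B (a i) (b j))) ≤ Real.exp (-T / 2) +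
       (if (univ.filter fun j => b j ∉ lev (En B a) r).card ≤ e ∧
          (3 / 2 : ℝ) ^ t * (lev (En B a) r).card ≤ (lev (En B a) (4 ^ t * r)).card then 1 else 0) := by
    intro a b
    have hexp := (Real.exp_pos (-T / 2)).le
    by_cases hg : Good B e a b
    · rw [if_pos hg]; split_ifs <;> linarith
    rw [if_neg hg]
    have hle : ∏ i, ∏ j, cc (B (a i) (b j)) ≤ Real.exp (-(∑ j, En B a (b j)) / 2) := by
      calc ∏ i, ∏ j, cc (B (a i) (b j)) ≤ ∏ i, ∏ j, Real.exp (-(ss (B (a i) (b j))) / 2) := by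
            refine Finset.prod_le_prod (fun i _ => Finset.prod_nonneg fun _ _ => cc_nonneg _) fun i _ => ?_
            exact Finset.prod_le_prod (fun _ _ => cc_nonneg _) fun j _ => cc_le_exp _
        _ = _ := by
            simp_rw [← Real.exp_sum]
            congr 1
            unfold En
            rw [Finset.sum_comm]
            simp_rw [neg_div, Finset.sum_neg_distrib, ← Finset.sum_div]
    by_cases hT : ∑ j, En B a (b j) ≤ T
    · have hc := hcard a b hT
      rcases growth (En B a) (En_zero B a) (En_neg B a) (En_add B a) r hr.le t with h | ⟨H, hH1, hH2⟩
      · rw [if_pos ⟨hc, h⟩]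
        have : ∏ i, ∏ j, cc (B (a i) (b j)) ≤ 1 :=
          Finset.prod_le_one (fun i _ => Finset.prod_nonneg fun _ _ => cc_nonneg _) fun i _ =>
            Finset.prod_le_one (fun _ _ => cc_nonneg _) fun _ _ => cc_le_one _
        linarith
      · exfalso
        apply hg
        refine ⟨AddSubgroup.toZModSubmodule p H, ?_, ?_⟩
        · apply good_of_subgroup hp B hsymm a _ (4 ^ t * r) e (by
            have : (0 : ℝ) ≤ 4 ^ t * r := by positivity
            linarith)
          intro b hb
          exact hH2 b hb
        · refine le_trans (Finset.card_le_card ?_) hc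
          intro j hj
          simp only [mem_filter, mem_univ, true_and] at hj ⊢
          intro h
          exact hj (hH1 _ (mem_lev.1 h))
    · have : Real.exp (-(∑ j, En B a (b j)) / 2) ≤ Real.exp (-T / 2) := by
        apply Real.exp_le_exp.2; linarith
      have h0 : (0 : ℝ) ≤ (if (univ.filter fun j => b j ∉ lev (En B a) r).card ≤ e ∧
          (3 / 2 : ℝ) ^ t * (lev (En B a) r).card ≤ (lev (En B a) (4 ^ t * r)).card then 1 else 0) := by
        split_ifs <;> norm_num
      linarith
  refine (Finset.sum_le_sum fun a _ => Finset.sum_le_sum fun b _ => hpt a b).trans ?_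
  simp_rw [Finset.sum_add_distrib]
  refine add_le_add (le_of_eq ?_) ?_
  · simp [h₁, h₂]; ring
  have hG : (0 : ℝ) < (3 / 2) ^ t := by positivity
  have h3 : ∀ a ∈ (univ : Finset (R₁ → V)), (∑ b : R₂ → V, if (univ.filter fun j => b j ∉ lev (En B a) r).card ≤ e ∧
          (3 / 2 : ℝ) ^ t * (lev (En B a) r).card ≤ (lev (En B a) (4 ^ t * r)).card then (1 : ℝ) else 0)
      ≤ 2 ^ N * (Fintype.card V : ℝ) ^ e * (1 / (3 / 2) ^ t) ^ N * ((lev (En B a) (4 ^ t * r)).card : ℝ) ^ N := by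
    intro a _
    by_cases hI : (3 / 2 : ℝ) ^ t * (lev (En B a) r).card ≤ (lev (En B a) (4 ^ t * r)).card
    · simp only [hI, and_true]
      rw [← Finset.sum_filter, Finset.sum_const, nsmul_eq_mul, mul_one]
      have h4 := count_exc (fun _ : R₂ => lev (En B a) r)
        (fun _ => ⟨0, by rw [mem_lev, En_zero]; exact hr.le⟩) e
      rw [Finset.prod_const, Finset.card_univ, h₂] at h4
      refine h4.trans ?_
      rw [mul_assoc _ ((1 / (3 / 2 : ℝ) ^ t) ^ N), ← mul_pow]
      gcongr
      rw [one_div, ← div_eq_inv_mul, le_div_iff₀ hG]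
      linarith
    · simp only [hI, and_false, if_false, Finset.sum_const_zero]
      positivity
  refine (Finset.sum_le_sum h3).trans ?_
  rw [← Finset.mul_sum]
  have h5 := sum_lev_pow hp B hB N h₁ (4 ^ t * r) (by positivity) e l hre hl
  refine (mul_le_mul_of_nonneg_left h5 (by positivity)).trans (le_of_eq ?_)
  have e1 : (16 / (3 / 2 : ℝ) ^ t) ^ N = 2 ^ N * 2 ^ N * 4 ^ N * (1 / (3 / 2) ^ t) ^ N := by
    rw [← mul_pow, ← mul_pow, ← mul_pow]; congr 1; ring
  rw [e1, mul_pow, pow_add, pow_add, two_mul, pow_add]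
  ring

end soft



section combine

set_option linter.unusedSectionVars false

lemma sum_split_le {ι V : Type*} [Fintype ι] [DecidableEq ι] [Fintype V] [DecidableEq V] (S T : Finset ι)
    (hST : Disjoint S T) (F : (S → V) → (T → V) → ℝ) (hF : ∀ a b, 0 ≤ F a b) :
    ∑ x : ι → V, F (fun i => x i) (fun j => x j) ≤
      (Fintype.card V : ℝ) ^ (Fintype.card ι - (S.card + T.card)) * ∑ a, ∑ b, F a b := by
  classical
  set π : (ι → V) → (S → V) × (T → V) := fun x => (fun i => x i, fun j => x j)
  have h1 : ∑ x : ι → V, F (fun i => x i) (fun j => x j) =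
      ∑ c : (S → V) × (T → V), ∑ x ∈ univ.filter (fun x => π x = c), F c.1 c.2 := by
    rw [← Finset.sum_fiberwise univ π]
    refine Finset.sum_congr rfl fun c _ => Finset.sum_congr rfl fun x hx => ?_
    rw [mem_filter] at hx
    rw [← hx.2]
  rw [h1, Finset.mul_sum, Fintype.sum_prod_type]
  refine Finset.sum_le_sum fun a _ => ?_
  rw [Finset.mul_sum]
  refine Finset.sum_le_sum fun b _ => ?_
  rw [Finset.sum_const, nsmul_eq_mul]
  refine mul_le_mul_of_nonneg_right ?_ (hF a b)
  have h2 : (univ.filter (fun x => π x = (a, b))).card ≤ (univ : Finset (((S ∪ T)ᶜ : Finset ι) → V)).card := by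
    refine Finset.card_le_card_of_injOn (fun x i => x i) (fun _ _ => by simp) ?_
    intro x hx y hy hxy
    simp only [π, Finset.coe_filter, mem_univ, true_and, Prod.mk.injEq] at hx hy
    obtain ⟨hx1, hx2⟩ := hx
    obtain ⟨hy1, hy2⟩ := hy
    funext i
    by_cases hS : i ∈ S
    · have := congrFun (hx1.trans hy1.symm) ⟨i, hS⟩; exact this
    by_cases hT : i ∈ T
    · have := congrFun (hx2.trans hy2.symm) ⟨i, hT⟩; exact this
    · exact congrFun hxy ⟨i, by simp [hS, hT]⟩
  rw [Finset.card_univ, Fintype.card_fun, Fintype.card_coe, Finset.card_compl, Finset.card_union_of_disjoint hST] at h2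
  exact_mod_cast h2

lemma count_small {ι : Type*} [Fintype ι] [DecidableEq ι] (e : ℕ) :
    (((univ : Finset (Finset ι)).filter fun X => X.card ≤ e).card : ℝ) ≤ 4 ^ e * (5 / 4) ^ Fintype.card ι := by
  have h1 : ∑ X : Finset ι, (1 / 4 : ℝ) ^ X.card = (5 / 4) ^ Fintype.card ι := by
    have := Fintype.sum_pow_mul_eq_add_pow ι (1 / 4 : ℝ) 1
    simp only [one_pow, mul_one] at this
    rw [this]; norm_num
  rw [← h1, Finset.mul_sum]
  calc (((univ : Finset (Finset ι)).filter fun X => X.card ≤ e).card : ℝ)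
      = ∑ X ∈ (univ : Finset (Finset ι)).filter (fun X => X.card ≤ e), (1 : ℝ) := by simp
    _ ≤ ∑ X ∈ (univ : Finset (Finset ι)).filter (fun X => X.card ≤ e), 4 ^ e * (1 / 4 : ℝ) ^ X.card := by
        refine Finset.sum_le_sum fun X hX => ?_
        rw [mem_filter] at hX
        rw [one_div, inv_pow, ← div_eq_mul_inv, le_div_iff₀ (by positivity), one_mul]
        exact pow_le_pow_right₀ (by norm_num) hX.2
    _ ≤ _ := Finset.sum_le_sum_of_subset_of_nonneg (Finset.filter_subset _ _) fun _ _ _ => by positivity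

variable {p : ℕ} [Fact p.Prime] {V : Type*} [AddCommGroup V] [Module (ZMod p) V] [Fintype V]

lemma exists_span (H : Submodule (ZMod p) V) (d : ℕ) (hd : Module.finrank (ZMod p) V = d) :
    ∃ h : Fin d → V, Submodule.span (ZMod p) (Set.range h) = H := by
  classical
  have hle : Module.finrank (ZMod p) H ≤ d := hd ▸ Submodule.finrank_le H
  let b := Module.finBasis (ZMod p) H
  refine ⟨fun i => if h : (i : ℕ) < Module.finrank (ZMod p) H then (b ⟨i, h⟩ : V) else 0, ?_⟩
  apply le_antisymm
  · rw [Submodule.span_le]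
    rintro _ ⟨i, rfl⟩
    dsimp only
    split_ifs
    · exact (b _).2
    · exact H.zero_mem
  · have h1 : Submodule.map H.subtype (Submodule.span (ZMod p) (Set.range b)) = H := by
      rw [b.span_eq]; simp
    refine h1.ge.trans ?_
    rw [Submodule.map_span, Submodule.span_le]
    rintro _ ⟨_, ⟨i, rfl⟩, rfl⟩
    apply Submodule.subset_span
    refine ⟨⟨i, i.2.trans_le hle⟩, ?_⟩
    simp

def Dom (B : LinearMap.BilinForm (ZMod p) V) {ι : Type*} (f : (ι → V) → ℝ) : Prop :=
  ∀ (x : ι → V) (S T : Finset ι), Disjoint S T → f x ≤ ∏ i ∈ S, ∏ j ∈ T, cc (B (x i) (x j))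

open Classical in
lemma bip_sum (hp : 2 < p) (B : LinearMap.BilinForm (ZMod p) V) (hsymm : ∀ x y, B x y = B y x)
    (hB : ∀ y, (∀ x, B x y = 0) → y = 0) {ι : Type*} [Fintype ι] (f : (ι → V) → ℝ) (hf : Dom B f)
    (S T' : Finset ι) (hST : Disjoint S T') (N : ℕ)
    (h₁ : S.card = N) (h₂ : T'.card = N)
    (T r : ℝ) (hr : 0 < r) (t e l : ℕ) (hTe : T ≤ e * r) (hre : 16 * (4 ^ t * r) ≤ e)
    (hl : (Fintype.card V : ℝ) * Real.exp (-(l : ℝ) / 16) < 1) :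
    ∑ x : ι → V, (if Good B e (fun i : S => x i) (fun j : T' => x j) then 0 else f x)
      ≤ (Fintype.card V : ℝ) ^ (Fintype.card ι - 2 * N) * ((Fintype.card V : ℝ) ^ (2 * N) * Real.exp (-T / 2) +
        (16 / (3 / 2) ^ t) ^ N * (Fintype.card V : ℝ) ^ (N + 2 * e + l)) := by
  have h1 := soft (R₁ := S) (R₂ := T') hp B hsymm hB N (by simpa using h₁) (by simpa using h₂) T r hr t e l hTe hre hl
  have h2 := sum_split_le (V := V) S T' hST (fun a b => if Good B e a b then 0 else ∏ i, ∏ j, cc (B (a i) (b j)))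
    (fun a b => by
      split_ifs
      · exact le_rfl
      · exact Finset.prod_nonneg fun _ _ => Finset.prod_nonneg fun _ _ => cc_nonneg _)
  rw [h₁, h₂, ← two_mul] at h2
  refine le_trans ?_ (h2.trans (mul_le_mul_of_nonneg_left (le_trans (le_of_eq ?_) h1) (by positivity)))
  swap
  · congr!
  refine Finset.sum_le_sum fun x _ => ?_
  split_ifs
  · exact le_rfl
  · refine (hf x S T' hST).trans (le_of_eq ?_)
    rw [← Finset.prod_coe_sort]
    refine Finset.prod_congr rfl fun i _ => ?_
    rw [← Finset.prod_coe_sort]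

open Classical in
lemma lagr_sum (hp : 2 < p) (B : LinearMap.BilinForm (ZMod p) V) (hsymm : ∀ x y, B x y = B y x)
    {ι : Type*} [Fintype ι] (f : (ι → V) → ℝ) (hf : Dom B f)
    (W : Submodule (ZMod p) V) (hW : W = B.orthogonal W) (e : ℕ) :
    ∑ x : ι → V, (if 1 ≤ (univ.filter fun i => x i ∉ W).card ∧ (univ.filter fun i => x i ∉ W).card ≤ e then f x else 0)
      ≤ (4 ^ e * (5 / 4) ^ Fintype.card ι) * ((Fintype.card V : ℝ) ^ (e + 1) *
        (Fintype.card W : ℝ) ^ Fintype.card ι * (3 / 4) ^ (Fintype.card ι - e)) := by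
  set WS : Finset V := univ.filter fun v => v ∈ W with hWS
  have hWc : (WS.card : ℝ) = Fintype.card W := by
    rw [Fintype.card_subtype]
  have hV1 : (1 : ℝ) ≤ Fintype.card V := by
    have : Nonempty V := ⟨0⟩
    exact_mod_cast Fintype.card_pos
  have hW1 : (1 : ℝ) ≤ Fintype.card W := by exact_mod_cast Fintype.card_pos
  -- the pointwise bound
  have hpt : ∀ x : ι → V, (if 1 ≤ (univ.filter fun i => x i ∉ W).card ∧ (univ.filter fun i => x i ∉ W).card ≤ e then f x else 0)
      ≤ ∑ X ∈ (univ : Finset (Finset ι)).filter (fun X => X.card ≤ e), ∑ y ∈ univ.filter (fun y : V => y ∉ W),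
        if x ∈ Fintype.piFinset (fun i => if i ∈ X then univ else WS) then
          ∏ i, (if i ∈ X then 1 else cc (B y (x i))) else 0 := by
    intro x
    have hnn : ∀ X : Finset ι, ∀ y : V, (0 : ℝ) ≤ if x ∈ Fintype.piFinset (fun i => if i ∈ X then univ else WS) then
          ∏ i, (if i ∈ X then 1 else cc (B y (x i))) else 0 := by
      intro X y
      split_ifs
      · refine Finset.prod_nonneg fun i _ => ?_
        split_ifs
        · norm_num
        · exact cc_nonneg _
      · exact le_rfl
    by_cases h : 1 ≤ (univ.filter fun i => x i ∉ W).card ∧ (univ.filter fun i => x i ∉ W).card ≤ e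
    swap
    · rw [if_neg h]
      exact Finset.sum_nonneg fun X _ => Finset.sum_nonneg fun y _ => hnn X y
    rw [if_pos h]
    obtain ⟨i0, hi0⟩ := Finset.card_pos.1 h.1
    rw [mem_filter] at hi0
    set X := univ.filter fun i => x i ∉ W with hX
    refine le_trans ?_ (Finset.single_le_sum (f := fun X => ∑ y ∈ univ.filter (fun y : V => y ∉ W),
        if x ∈ Fintype.piFinset (fun i => if i ∈ X then univ else WS) then
          ∏ i, (if i ∈ X then 1 else cc (B y (x i))) else 0) (fun X _ => Finset.sum_nonneg fun y _ => hnn X y)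
          (mem_filter.2 ⟨mem_univ X, h.2⟩))
    refine le_trans ?_ (Finset.single_le_sum (f := fun y =>
        if x ∈ Fintype.piFinset (fun i => if i ∈ X then univ else WS) then
          ∏ i, (if i ∈ X then 1 else cc (B y (x i))) else 0) (fun y _ => hnn X y)
          (mem_filter.2 ⟨mem_univ (x i0), hi0.2⟩))
    rw [if_pos]
    · refine (hf x {i0} Xᶜ ?_).trans (le_of_eq ?_)
      · rw [Finset.disjoint_singleton_left]; simp [hX, hi0.2]
      · rw [Finset.prod_singleton, Finset.prod_ite, Finset.prod_const_one, one_mul]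
        refine Finset.prod_congr ?_ fun _ _ => rfl
        ext i; simp
    · rw [Fintype.mem_piFinset]
      intro i
      by_cases hi : x i ∈ W <;> simp [hX, hi, hWS]
  refine (Finset.sum_le_sum fun x _ => hpt x).trans ?_
  rw [Finset.sum_comm]
  have hXb : ∀ X ∈ (univ : Finset (Finset ι)).filter (fun X => X.card ≤ e),
      (∑ x : ι → V, ∑ y ∈ univ.filter (fun y : V => y ∉ W),
        if x ∈ Fintype.piFinset (fun i => if i ∈ X then univ else WS) then
          ∏ i, (if i ∈ X then 1 else cc (B y (x i))) else 0) ≤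
      (Fintype.card V : ℝ) ^ (e + 1) *
        (Fintype.card W : ℝ) ^ Fintype.card ι * (3 / 4) ^ (Fintype.card ι - e) := by
    intro X hX
    rw [mem_filter] at hX
    rw [Finset.sum_comm]
    have hy : ∀ y ∈ univ.filter (fun y : V => y ∉ W),
        (∑ x : ι → V, if x ∈ Fintype.piFinset (fun i => if i ∈ X then univ else WS) then
          ∏ i, (if i ∈ X then 1 else cc (B y (x i))) else 0) ≤
        (Fintype.card V : ℝ) ^ e *
        (Fintype.card W : ℝ) ^ Fintype.card ι * (3 / 4) ^ (Fintype.card ι - e) := by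
      intro y hy
      rw [mem_filter] at hy
      rw [← Finset.sum_filter, Finset.filter_mem_eq_inter, Finset.univ_inter,
        ← Finset.prod_univ_sum (fun i => if i ∈ X then univ else WS) (fun i v => if i ∈ X then 1 else cc (B y v))]
      have hsum : ∑ v ∈ WS, cc (B y v) ≤ 3 / 4 * (Fintype.card W : ℝ) := by
        have := sum_cc_linear hp ((B y).comp W.subtype) (by
          intro h0
          apply hy.2
          rw [hW, LinearMap.BilinForm.mem_orthogonal_iff]
          intro n hn
          have := LinearMap.congr_fun h0 ⟨n, hn⟩
          show B n y = 0
          rw [hsymm]; simpa using this)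
        refine le_trans (le_of_eq ?_) this
        rw [hWS]
        exact (Finset.sum_subtype _ (by simp) (fun v => cc (B y v)))
      calc (∏ i, ∑ v ∈ (if i ∈ X then univ else WS), (if i ∈ X then 1 else cc (B y v)))
          ≤ ∏ i, (if i ∈ X then (Fintype.card V : ℝ) else 3 / 4 * (Fintype.card W : ℝ)) := by
            refine Finset.prod_le_prod ?_ ?_
            · intro i _
              refine Finset.sum_nonneg fun v _ => ?_
              split_ifs
              · norm_num
              · exact cc_nonneg _
            · intro i _
              split_ifs
              · simp
              · exact hsum
        _ = (Fintype.card V : ℝ) ^ X.card * (3 / 4 * (Fintype.card W : ℝ)) ^ (Fintype.card ι - X.card) := by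
            rw [Finset.prod_ite, Finset.prod_const, Finset.prod_const]
            congr 2
            · simp
            · rw [← Finset.card_compl]; congr 1; ext i; simp
        _ = (Fintype.card V : ℝ) ^ X.card * (Fintype.card W : ℝ) ^ (Fintype.card ι - X.card) *
            (3 / 4) ^ (Fintype.card ι - X.card) := by rw [mul_pow]; ring
        _ ≤ _ := by
            have a1 := pow_le_pow_right₀ hV1 hX.2
            have a2 := pow_le_pow_right₀ hW1 (Nat.sub_le (Fintype.card ι) X.card)
            have a3 : (3 / 4 : ℝ) ^ (Fintype.card ι - X.card) ≤ (3 / 4) ^ (Fintype.card ι - e) :=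
              pow_le_pow_of_le_one (by norm_num) (by norm_num) (Nat.sub_le_sub_left hX.2 _)
            gcongr
    refine (Finset.sum_le_sum hy).trans ?_
    rw [Finset.sum_const, nsmul_eq_mul]
    have : ((univ.filter (fun y : V => y ∉ W)).card : ℝ) ≤ Fintype.card V := by
      exact_mod_cast Finset.card_le_univ _
    calc _ ≤ (Fintype.card V : ℝ) * _ := mul_le_mul_of_nonneg_right this (by positivity)
      _ = _ := by rw [pow_succ]; ring
  refine (Finset.sum_le_sum hXb).trans ?_
  rw [Finset.sum_const, nsmul_eq_mul]
  exact mul_le_mul_of_nonneg_right (count_small e) (by positivity)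

end combine



section dims

set_option linter.unusedSectionVars false

variable {p : ℕ} [Fact p.Prime] {V : Type*} [AddCommGroup V] [Module (ZMod p) V] [Fintype V]

lemma orth_dim (B : LinearMap.BilinForm (ZMod p) V) (hnd : B.Nondegenerate)
    (U W : Submodule (ZMod p) V) (h : ∀ x ∈ U, ∀ y ∈ W, B x y = 0) :
    Module.finrank (ZMod p) U + Module.finrank (ZMod p) W ≤ Module.finrank (ZMod p) V ∧
    (Module.finrank (ZMod p) U + Module.finrank (ZMod p) W = Module.finrank (ZMod p) V → W = B.orthogonal U) := by
  have hle : W ≤ B.orthogonal U := fun y hy => by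
    rw [LinearMap.BilinForm.mem_orthogonal_iff]
    intro x hx; exact h x hx y hy
  have h1 := Submodule.finrank_mono hle
  have h2 := LinearMap.BilinForm.finrank_orthogonal hnd U
  have h3 := Submodule.finrank_le U
  refine ⟨by omega, fun h4 => Submodule.eq_of_le_of_finrank_eq hle (by omega)⟩

lemma W_dich (B : LinearMap.BilinForm (ZMod p) V) (hnd : B.Nondegenerate)
    (W0 W1 W2 W3 : Submodule (ZMod p) V)
    (h01 : ∀ x ∈ W0, ∀ y ∈ W1, B x y = 0) (h02 : ∀ x ∈ W0, ∀ y ∈ W2, B x y = 0)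
    (h03 : ∀ x ∈ W0, ∀ y ∈ W3, B x y = 0) (h12 : ∀ x ∈ W1, ∀ y ∈ W2, B x y = 0)
    (h13 : ∀ x ∈ W1, ∀ y ∈ W3, B x y = 0) (h23 : ∀ x ∈ W2, ∀ y ∈ W3, B x y = 0) 
    (h10 : ∀ x ∈ W1, ∀ y ∈ W0, B x y = 0) :
    Module.finrank (ZMod p) W0 + Module.finrank (ZMod p) W1 + Module.finrank (ZMod p) W2 +
      Module.finrank (ZMod p) W3 + 1 ≤ 2 * Module.finrank (ZMod p) V ∨
    (W1 = B.orthogonal W1 ∧ W0 = W1 ∧ W2 = W1 ∧ W3 = W1) := by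
  by_cases hc : Module.finrank (ZMod p) W0 + Module.finrank (ZMod p) W1 + Module.finrank (ZMod p) W2 +
      Module.finrank (ZMod p) W3 + 1 ≤ 2 * Module.finrank (ZMod p) V
  · exact Or.inl hc
  right
  obtain ⟨a1, b1⟩ := orth_dim B hnd _ _ h01
  obtain ⟨a2, b2⟩ := orth_dim B hnd _ _ h02
  obtain ⟨a3, b3⟩ := orth_dim B hnd _ _ h03
  obtain ⟨a4, b4⟩ := orth_dim B hnd _ _ h12
  obtain ⟨a5, b5⟩ := orth_dim B hnd _ _ h13
  obtain ⟨a6, b6⟩ := orth_dim B hnd _ _ h23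
  obtain ⟨a7, b7⟩ := orth_dim B hnd _ _ h10
  have c1 := b1 (by omega)
  have c2 := b2 (by omega)
  have c3 := b3 (by omega)
  have c4 := b4 (by omega)
  have c7 := b7 (by omega)
  have e2 : W2 = W1 := c2.trans c1.symm
  have e3 : W3 = W1 := c3.trans c1.symm
  have e1 : W1 = B.orthogonal W1 := e2.symm.trans c4
  exact ⟨e1, c7.trans e1.symm, e2, e3⟩

/-- the four subspaces. -/
def Wf (B : LinearMap.BilinForm (ZMod p) V) (H1 H2 H3 : Submodule (ZMod p) V) (k : Fin 5) :
    Submodule (ZMod p) V :=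
  ![B.orthogonal H1 ⊓ B.orthogonal H2 ⊓ B.orthogonal H3, B.orthogonal H1 ⊓ H2 ⊓ H3,
    H1 ⊓ B.orthogonal H2 ⊓ H3, H1 ⊓ H2 ⊓ B.orthogonal H3, ⊤] k

lemma Wf_dich (B : LinearMap.BilinForm (ZMod p) V) (hnd : B.Nondegenerate) (hsymm : ∀ x y, B x y = B y x)
    (H1 H2 H3 : Submodule (ZMod p) V) :
    Module.finrank (ZMod p) (Wf B H1 H2 H3 0) + Module.finrank (ZMod p) (Wf B H1 H2 H3 1) +
      Module.finrank (ZMod p) (Wf B H1 H2 H3 2) +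
      Module.finrank (ZMod p) (Wf B H1 H2 H3 3) + 1 ≤ 2 * Module.finrank (ZMod p) V ∨
    ∃ U : Submodule (ZMod p) V, U = B.orthogonal U ∧ ∀ k, k ≠ 4 → Wf B H1 H2 H3 k = U := by
  have ho : ∀ H : Submodule (ZMod p) V, ∀ x ∈ H, ∀ y ∈ B.orthogonal H, B x y = 0 := by
    intro H x hx y hy
    rw [LinearMap.BilinForm.mem_orthogonal_iff] at hy
    exact hy x hx
  have ho' : ∀ H : Submodule (ZMod p) V, ∀ x ∈ B.orthogonal H, ∀ y ∈ H, B x y = 0 := by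
    intro H x hx y hy
    rw [hsymm]; exact ho H y hy x hx
  rcases W_dich B hnd (Wf B H1 H2 H3 0) (Wf B H1 H2 H3 1) (Wf B H1 H2 H3 2) (Wf B H1 H2 H3 3)
    (fun x hx y hy => ho' H2 x hx.1.2 y hy.1.2)
    (fun x hx y hy => ho' H1 x hx.1.1 y hy.1.1)
    (fun x hx y hy => ho' H1 x hx.1.1 y hy.1.1)
    (fun x hx y hy => ho' H1 x hx.1.1 y hy.1.1)
    (fun x hx y hy => ho' H1 x hx.1.1 y hy.1.1)
    (fun x hx y hy => ho H3 x hx.2 y hy.2)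
    (fun x hx y hy => ho H2 x hx.1.2 y hy.1.2) with h | ⟨h1, h2, h3, h4⟩
  · exact Or.inl h
  · refine Or.inr ⟨_, h1, ?_⟩
    intro k hk
    fin_cases k
    · exact h2
    · rfl
    · exact h3
    · exact h4
    · exact absurd rfl hk

lemma card_sub_filter {ι : Type*} [Fintype ι] (S : Finset ι) (P : ι → Prop) [DecidablePred P]
    {inst : DecidablePred fun i : S => P i} :
    (univ.filter fun i : S => P i).card = (S.filter P).card := by
  rw [← Finset.card_map (Function.Embedding.subtype _)]
  congr 1
  ext i
  simp [and_comm]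

open Classical in
def Qs {ι : Type*} [Fintype ι] (lab : ι → Fin 5) (k l : Fin 5) : Finset ι := univ.filter fun i => lab i = k ∨ lab i = l

lemma Qs_disj {ι : Type*} [Fintype ι] (lab : ι → Fin 5) (k l k' l' : Fin 5) (h : k ≠ k' ∧ k ≠ l' ∧ l ≠ k' ∧ l ≠ l') :
    Disjoint (Qs lab k l) (Qs lab k' l') := by
  classical
  rw [Finset.disjoint_left]
  intro i hi hj
  simp only [Qs, mem_filter, mem_univ, true_and] at hi hj
  obtain ⟨a, b, c, d⟩ := h
  rcases hi with hi | hi <;> rcases hj with hj | hj <;> simp_all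

open Classical in
lemma exc_bound (B : LinearMap.BilinForm (ZMod p) V) {ι : Type*} [Fintype ι] (lab : ι → Fin 5) (x : ι → V) (e : ℕ)
    (h1 : Good B e (fun i : Qs lab 0 1 => x i) (fun i : Qs lab 2 3 => x i))
    (h2 : Good B e (fun i : Qs lab 0 2 => x i) (fun i : Qs lab 1 3 => x i))
    (h3 : Good B e (fun i : Qs lab 0 3 => x i) (fun i : Qs lab 1 2 => x i)) :
    ∃ H1 H2 H3 : Submodule (ZMod p) V, (univ.filter fun i => x i ∉ Wf B H1 H2 H3 (lab i)).card ≤ 6 * e := by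
  obtain ⟨H1, a1, b1⟩ := h1
  obtain ⟨H2, a2, b2⟩ := h2
  obtain ⟨H3, a3, b3⟩ := h3
  refine ⟨H1, H2, H3, ?_⟩
  beta_reduce at a1 a2 a3 b1 b2 b3
  rw [card_sub_filter _ (fun i => x i ∉ B.orthogonal H1)] at a1
  rw [card_sub_filter _ (fun i => x i ∉ B.orthogonal H2)] at a2
  rw [card_sub_filter _ (fun i => x i ∉ B.orthogonal H3)] at a3
  rw [card_sub_filter _ (fun i => x i ∉ H1)] at b1
  rw [card_sub_filter _ (fun i => x i ∉ H2)] at b2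
  rw [card_sub_filter _ (fun i => x i ∉ H3)] at b3
  have hsub : (univ.filter fun i => x i ∉ Wf B H1 H2 H3 (lab i)) ⊆
     ((Qs lab 0 1).filter fun i => x i ∉ B.orthogonal H1) ∪ (((Qs lab 0 2).filter fun i => x i ∉ B.orthogonal H2) ∪
      (((Qs lab 0 3).filter fun i => x i ∉ B.orthogonal H3) ∪ (((Qs lab 2 3).filter fun i => x i ∉ H1) ∪
      (((Qs lab 1 3).filter fun i => x i ∉ H2) ∪ ((Qs lab 1 2).filter fun i => x i ∉ H3))))) := by
    intro i hi
    rw [mem_filter] at hi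
    have hi := hi.2
    simp only [mem_union, mem_filter, Qs, mem_univ, true_and]
    by_contra hcon
    apply hi
    simp only [not_or, not_and, not_not] at hcon
    obtain ⟨c1, c2, c3, c4, c5, c6⟩ := hcon
    generalize lab i = k at *
    fin_cases k
    · exact ⟨⟨c1 (by simp), c2 (by simp)⟩, c3 (by simp)⟩
    · exact ⟨⟨c1 (by simp), c5 (by simp)⟩, c6 (by simp)⟩
    · exact ⟨⟨c4 (by simp), c2 (by simp)⟩, c6 (by simp)⟩
    · exact ⟨⟨c4 (by simp), c5 (by simp)⟩, c3 (by simp)⟩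
    · exact Submodule.mem_top
  refine (Finset.card_le_card hsub).trans ?_
  refine (Finset.card_union_le _ _).trans ?_
  refine (Nat.add_le_add_left (Finset.card_union_le _ _) _).trans ?_
  refine (Nat.add_le_add_left (Nat.add_le_add_left (Finset.card_union_le _ _) _) _).trans ?_
  refine (Nat.add_le_add_left (Nat.add_le_add_left (Nat.add_le_add_left (Finset.card_union_le _ _) _) _) _).trans ?_
  refine (Nat.add_le_add_left (Nat.add_le_add_left (Nat.add_le_add_left (Nat.add_le_add_left (Finset.card_union_le _ _) _) _) _) _).trans ?_
  omega

def Iso (B : LinearMap.BilinForm (ZMod p) V) {ι : Type*} (x : ι → V) : Prop := ∀ i j, B (x i) (x j) = 0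

open Classical in
lemma main_pt (B : LinearMap.BilinForm (ZMod p) V) (hnd : B.Nondegenerate) (hsymm : ∀ x y, B x y = B y x)
    {ι : Type*} [Fintype ι] (lab : ι → Fin 5) (h4 : (univ.filter fun i => lab i = 4).card ≤ 3) (x : ι → V)
    (hx : ¬ Iso B x) (e : ℕ)
    (h1 : Good B e (fun i : Qs lab 0 1 => x i) (fun i : Qs lab 2 3 => x i))
    (h2 : Good B e (fun i : Qs lab 0 2 => x i) (fun i : Qs lab 1 3 => x i))
    (h3 : Good B e (fun i : Qs lab 0 3 => x i) (fun i : Qs lab 1 2 => x i)) :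
    (∃ H1 H2 H3 : Submodule (ZMod p) V, 
      Module.finrank (ZMod p) (Wf B H1 H2 H3 0) + Module.finrank (ZMod p) (Wf B H1 H2 H3 1) +
      Module.finrank (ZMod p) (Wf B H1 H2 H3 2) +
      Module.finrank (ZMod p) (Wf B H1 H2 H3 3) + 1 ≤ 2 * Module.finrank (ZMod p) V ∧
      (univ.filter fun i => x i ∉ Wf B H1 H2 H3 (lab i)).card ≤ 6 * e) ∨
    (∃ U : Submodule (ZMod p) V, U = B.orthogonal U ∧ 1 ≤ (univ.filter fun i => x i ∉ U).card ∧
      (univ.filter fun i => x i ∉ U).card ≤ 6 * e + 3) := by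
  obtain ⟨H1, H2, H3, hH⟩ := exc_bound B lab x e h1 h2 h3
  rcases Wf_dich B hnd hsymm H1 H2 H3 with h | ⟨U, hU, hk⟩
  · exact Or.inl ⟨H1, H2, H3, h, hH⟩
  · refine Or.inr ⟨U, hU, ?_, ?_⟩
    · rw [Nat.one_le_iff_ne_zero]
      intro h0
      apply hx
      rw [Finset.card_eq_zero, Finset.filter_eq_empty_iff] at h0
      intro i j
      have hi := not_not.1 (h0 (mem_univ i))
      have hj := not_not.1 (h0 (mem_univ j))
      rw [hU, LinearMap.BilinForm.mem_orthogonal_iff] at hj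
      exact hj _ hi
    · have hsub : (univ.filter fun i => x i ∉ U) ⊆ (univ.filter fun i => x i ∉ Wf B H1 H2 H3 (lab i)) ∪
        (univ.filter fun i => lab i = 4) := by
        intro i hi
        rw [mem_union, mem_filter, mem_filter]
        by_cases hl : lab i = 4
        · exact Or.inr ⟨mem_univ _, hl⟩
        · left; rw [hk _ hl]; simpa using hi
      exact (Finset.card_le_card hsub).trans ((Finset.card_union_le _ _).trans (Nat.add_le_add hH h4))

open Classical in
lemma count_W {ι : Type*} [Fintype ι] (lab : ι → Fin 5) (q : ℕ)
    (hq : ∀ k, k ≠ 4 → (univ.filter fun i => lab i = k).card = q) (h4 : (univ.filter fun i => lab i = 4).card ≤ 3)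
    (d : ℕ) (hd : Module.finrank (ZMod p) V = d) (e : ℕ) (W : Fin 5 → Submodule (ZMod p) V)
    (hW : Module.finrank (ZMod p) (W 0) + Module.finrank (ZMod p) (W 1) +
      Module.finrank (ZMod p) (W 2) + Module.finrank (ZMod p) (W 3) + 1 ≤ 2 * d) :
    ((univ.filter fun x : ι → V => (univ.filter fun i => x i ∉ W (lab i)).card ≤ e).card : ℝ)
      ≤ 2 ^ Fintype.card ι * (p : ℝ) ^ (d * e + q * (2 * d - 1) + 3 * d) := by
  have hp1 : (1 : ℝ) ≤ p := by exact_mod_cast (Fact.out : p.Prime).one_lt.le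
  have hV : Fintype.card V = p ^ d := by
    rw [Module.card_eq_pow_finrank (K := ZMod p), ZMod.card, hd]
  have hne : Nonempty V := ⟨0⟩
  have h1 := count_exc (ι := ι) (V := V) (fun i => univ.filter fun v => v ∈ W (lab i)) (fun i => ⟨0, by simp⟩) e
  simp only [mem_filter, mem_univ, true_and] at h1
  refine h1.trans ?_
  have hc : ∀ k : Fin 5, ((univ.filter fun v => v ∈ W k).card : ℝ) = (p : ℝ) ^ Module.finrank (ZMod p) (W k) := by
    intro k
    have : Fintype.card (W k) = p ^ Module.finrank (ZMod p) (W k) := by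
      rw [Module.card_eq_pow_finrank (K := ZMod p), ZMod.card]
    rw [← Nat.cast_pow, ← this, Fintype.card_subtype]
  have hprod : ∏ i, ((univ.filter fun v => v ∈ W (lab i)).card : ℝ) ≤ (p : ℝ) ^ (q * (2 * d - 1) + 3 * d) := by
    simp_rw [hc]
    rw [Finset.prod_pow_eq_pow_sum, ← Finset.sum_fiberwise univ lab]
    apply pow_le_pow_right₀ hp1
    have hs : ∀ k, ∑ i ∈ univ.filter (fun i => lab i = k), Module.finrank (ZMod p) (W (lab i)) =
       (univ.filter fun i => lab i = k).card * Module.finrank (ZMod p) (W k) := by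
      intro k
      rw [← smul_eq_mul, ← Finset.sum_const]
      refine Finset.sum_congr rfl fun i hi => ?_
      rw [mem_filter] at hi
      rw [hi.2]
    simp_rw [hs]
    rw [Fin.sum_univ_five, hq 0 (by decide), hq 1 (by decide), hq 2 (by decide), hq 3 (by decide)]
    have hw4 : Module.finrank (ZMod p) (W 4) ≤ d := hd ▸ Submodule.finrank_le _
    have := Nat.mul_le_mul h4 hw4
    have h2 := Nat.mul_le_mul_left q (show Module.finrank (ZMod p) (W 0) + Module.finrank (ZMod p) (W 1) +
      Module.finrank (ZMod p) (W 2) + Module.finrank (ZMod p) (W 3) ≤ 2 * d - 1 by omega)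
    simp only [Nat.mul_add] at h2
    exact Nat.add_le_add h2 this
  calc _ ≤ 2 ^ Fintype.card ι * (Fintype.card V : ℝ) ^ e * (p : ℝ) ^ (q * (2 * d - 1) + 3 * d) := by
        gcongr
    _ = _ := by
        rw [hV]; push_cast; rw [← pow_mul, mul_assoc, ← pow_add, Nat.add_assoc]

lemma half_dim (B : LinearMap.BilinForm (ZMod p) V) (hnd : B.Nondegenerate) (m : ℕ)
    (hd : Module.finrank (ZMod p) V = 2 * m) (U : Submodule (ZMod p) V) (hU : U = B.orthogonal U) :
    Module.finrank (ZMod p) U = m := by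
  have h2 := LinearMap.BilinForm.finrank_orthogonal hnd U
  rw [← hU] at h2
  have := Submodule.finrank_le U
  omega

open Classical in
theorem noniso_sum (hp : 2 < p) (B : LinearMap.BilinForm (ZMod p) V) (hnd : B.Nondegenerate)
    (hsymm : ∀ x y, B x y = B y x)
    (hB : ∀ y, (∀ x, B x y = 0) → y = 0) (m : ℕ) (hd : Module.finrank (ZMod p) V = 2 * m)
    {ι : Type*} [Fintype ι] (f : (ι → V) → ℝ) (hf0 : ∀ x, 0 ≤ f x) (hf : Dom B f)
    (lab : ι → Fin 5) (q : ℕ)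
    (hq : ∀ k, k ≠ 4 → (univ.filter fun i => lab i = k).card = q) (h4 : (univ.filter fun i => lab i = 4).card ≤ 3)
    (T r : ℝ) (hr : 0 < r) (t e l : ℕ) (hTe : T ≤ e * r) (hre : 16 * (4 ^ t * r) ≤ e)
    (hl : (Fintype.card V : ℝ) * Real.exp (-(l : ℝ) / 16) < 1) :
    ∑ x : ι → V, (if Iso B x then 0 else f x)
      ≤ 3 * ((Fintype.card V : ℝ) ^ (Fintype.card ι - 2 * (2 * q)) * ((Fintype.card V : ℝ) ^ (2 * (2 * q)) * Real.exp (-T / 2) +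
        (16 / (3 / 2) ^ t) ^ (2 * q) * (Fintype.card V : ℝ) ^ (2 * q + 2 * e + l))) +
       (p : ℝ) ^ (3 * (2 * m) * (2 * m)) * 
         (2 ^ Fintype.card ι * (p : ℝ) ^ (2 * m * (6 * e) + q * (2 * (2 * m) - 1) + 3 * (2 * m))) +
       (p : ℝ) ^ (2 * m * (2 * m)) *
         ((4 ^ (6 * e + 3) * (5 / 4) ^ Fintype.card ι) * ((p : ℝ) ^ (2 * m * (6 * e + 3 + 1)) *
        (p : ℝ) ^ (m * Fintype.card ι) * (3 / 4) ^ (Fintype.card ι - (6 * e + 3)))) := by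
  have hV : Fintype.card V = p ^ (2 * m) := by
    rw [Module.card_eq_pow_finrank (K := ZMod p), ZMod.card, hd]
  have hf1 : ∀ x, f x ≤ 1 := fun x => by simpa using hf x ∅ ∅ (by simp)
  have hQ : ∀ k l : Fin 5, k ≠ l → k ≠ 4 → l ≠ 4 → (Qs lab k l).card = 2 * q := by
    intro k l hkl hk hl
    unfold Qs
    rw [Finset.filter_or, Finset.card_union_of_disjoint, hq k hk, hq l hl, two_mul]
    rw [Finset.disjoint_filter]
    intro i _ hi hj; exact hkl (hi.symm.trans hj)
  have b1 := bip_sum hp B hsymm hB f hf (Qs lab 0 1) (Qs lab 2 3) (Qs_disj _ _ _ _ _ (by decide)) (2 * q)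
    (hQ _ _ (by decide) (by decide) (by decide)) (hQ _ _ (by decide) (by decide) (by decide)) T r hr t e l hTe hre hl
  have b2 := bip_sum hp B hsymm hB f hf (Qs lab 0 2) (Qs lab 1 3) (Qs_disj _ _ _ _ _ (by decide)) (2 * q)
    (hQ _ _ (by decide) (by decide) (by decide)) (hQ _ _ (by decide) (by decide) (by decide)) T r hr t e l hTe hre hl
  have b3 := bip_sum hp B hsymm hB f hf (Qs lab 0 3) (Qs lab 1 2) (Qs_disj _ _ _ _ _ (by decide)) (2 * q)
    (hQ _ _ (by decide) (by decide) (by decide)) (hQ _ _ (by decide) (by decide) (by decide)) T r hr t e l hTe hre hl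
  let sp : (Fin (2 * m) → V) → Submodule (ZMod p) V := fun h => Submodule.span (ZMod p) (Set.range h)
  let P1 : (Fin 3 → Fin (2 * m) → V) → (Fin 5 → Submodule (ZMod p) V) := fun h => Wf B (sp (h 0)) (sp (h 1)) (sp (h 2))
  let g1 : (Fin 3 → Fin (2 * m) → V) → (ι → V) → ℝ := fun h x =>
    if (Module.finrank (ZMod p) (P1 h 0) + Module.finrank (ZMod p) (P1 h 1) +
      Module.finrank (ZMod p) (P1 h 2) + Module.finrank (ZMod p) (P1 h 3) + 1 ≤ 2 * (2 * m) ∧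
      (univ.filter fun i => x i ∉ P1 h (lab i)).card ≤ 6 * e) then 1 else 0
  let g2 : (Fin (2 * m) → V) → (ι → V) → ℝ := fun h x =>
    if sp h = B.orthogonal (sp h) then 
      (if 1 ≤ (univ.filter fun i => x i ∉ sp h).card ∧ (univ.filter fun i => x i ∉ sp h).card ≤ 6 * e + 3 then f x else 0)
      else 0
  have g1n : ∀ h x, 0 ≤ g1 h x := fun h x => by
    simp only [g1]; split_ifs <;> norm_num
  have g2n : ∀ h x, 0 ≤ g2 h x := fun h x => by
    simp only [g2]; split_ifs <;> first | exact hf0 x | exact le_rfl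
  have hpt : ∀ x : ι → V, (if Iso B x then 0 else f x) ≤
      (if Good B e (fun i : Qs lab 0 1 => x i) (fun i : Qs lab 2 3 => x i) then 0 else f x) +
      (if Good B e (fun i : Qs lab 0 2 => x i) (fun i : Qs lab 1 3 => x i) then 0 else f x) +
      (if Good B e (fun i : Qs lab 0 3 => x i) (fun i : Qs lab 1 2 => x i) then 0 else f x) +
      ∑ h, g1 h x + ∑ h, g2 h x := by
    intro x
    have s1 : 0 ≤ ∑ h, g1 h x := Finset.sum_nonneg fun h _ => g1n h x
    have s2 : 0 ≤ ∑ h, g2 h x := Finset.sum_nonneg fun h _ => g2n h x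
    have hfx := hf0 x
    by_cases hI : Iso B x
    · rw [if_pos hI]
      split_ifs <;> linarith
    rw [if_neg hI]
    by_cases c1 : Good B e (fun i : Qs lab 0 1 => x i) (fun i : Qs lab 2 3 => x i)
    swap
    · rw [if_neg c1]; split_ifs <;> linarith
    by_cases c2 : Good B e (fun i : Qs lab 0 2 => x i) (fun i : Qs lab 1 3 => x i)
    swap
    · rw [if_neg c2]; split_ifs <;> linarith
    by_cases c3 : Good B e (fun i : Qs lab 0 3 => x i) (fun i : Qs lab 1 2 => x i)
    swap
    · rw [if_neg c3]; split_ifs <;> linarith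
    rw [if_pos c1, if_pos c2, if_pos c3]
    rcases main_pt B hnd hsymm lab h4 x hI e c1 c2 c3 with ⟨H1, H2, H3, hdim, hexc⟩ | ⟨U, hU, hu1, hu2⟩
    · obtain ⟨s, hs⟩ := exists_span H1 _ hd
      obtain ⟨s', hs'⟩ := exists_span H2 _ hd
      obtain ⟨s'', hs''⟩ := exists_span H3 _ hd
      have key : g1 ![s, s', s''] x = 1 := by
        have : P1 ![s, s', s''] = Wf B H1 H2 H3 := by
          simp only [P1, sp]
          simp [hs, hs', hs'']
        simp only [g1]
        rw [this, if_pos]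
        rw [hd] at hdim
        exact ⟨hdim, hexc⟩
      have := Finset.single_le_sum (f := fun h => g1 h x) (fun h _ => g1n h x) (mem_univ ![s, s', s''])
      simp only [key] at this
      have := hf1 x
      linarith
    · obtain ⟨s, hs⟩ := exists_span U _ hd
      have key : g2 s x = f x := by
        simp only [g2, sp]
        rw [hs, if_pos hU, if_pos ⟨hu1, hu2⟩]
      have := Finset.single_le_sum (f := fun h => g2 h x) (fun h _ => g2n h x) (mem_univ s)
      simp only [key] at this
      linarith
  have hs1 : ∑ x : ι → V, ∑ h, g1 h x ≤ (p : ℝ) ^ (3 * (2 * m) * (2 * m)) * 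
         (2 ^ Fintype.card ι * (p : ℝ) ^ (2 * m * (6 * e) + q * (2 * (2 * m) - 1) + 3 * (2 * m))) := by
    rw [Finset.sum_comm]
    have : ∀ h, ∑ x : ι → V, g1 h x ≤ 
      (2 ^ Fintype.card ι * (p : ℝ) ^ (2 * m * (6 * e) + q * (2 * (2 * m) - 1) + 3 * (2 * m))) := by
      intro h
      by_cases hh : Module.finrank (ZMod p) (P1 h 0) + Module.finrank (ZMod p) (P1 h 1) +
      Module.finrank (ZMod p) (P1 h 2) + Module.finrank (ZMod p) (P1 h 3) + 1 ≤ 2 * (2 * m)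
      · refine le_trans (le_of_eq ?_) (count_W lab q hq h4 _ hd (6 * e) (P1 h) hh)
        simp only [g1, hh, true_and]
        rw [Finset.sum_boole]
      · simp only [g1, hh, false_and, if_false, Finset.sum_const_zero]
        positivity
    refine (Finset.sum_le_sum fun h _ => this h).trans (le_of_eq ?_)
    rw [Finset.sum_const, nsmul_eq_mul, Finset.card_univ, Fintype.card_fun, Fintype.card_fun, hV]
    congr 1
    simp only [Fintype.card_fin]
    push_cast
    rw [← pow_mul, ← pow_mul]
    congr 1; ring
  have hs2 : ∑ x : ι → V, ∑ h, g2 h x ≤ (p : ℝ) ^ (2 * m * (2 * m)) *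
         ((4 ^ (6 * e + 3) * (5 / 4) ^ Fintype.card ι) * ((p : ℝ) ^ (2 * m * (6 * e + 3 + 1)) *
        (p : ℝ) ^ (m * Fintype.card ι) * (3 / 4) ^ (Fintype.card ι - (6 * e + 3)))) := by
    rw [Finset.sum_comm]
    have : ∀ h, ∑ x : ι → V, g2 h x ≤ 
      ((4 ^ (6 * e + 3) * (5 / 4) ^ Fintype.card ι) * ((p : ℝ) ^ (2 * m * (6 * e + 3 + 1)) *
        (p : ℝ) ^ (m * Fintype.card ι) * (3 / 4) ^ (Fintype.card ι - (6 * e + 3)))) := by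
      intro h
      by_cases hh : sp h = B.orthogonal (sp h)
      · have := lagr_sum hp B hsymm f hf (sp h) hh (6 * e + 3)
        have hc : (Fintype.card (sp h) : ℝ) = (p : ℝ) ^ m := by
          rw [Module.card_eq_pow_finrank (K := ZMod p), ZMod.card, half_dim B hnd m hd _ hh]
          push_cast; rfl
        simp only [g2, if_pos hh]
        refine this.trans (le_of_eq ?_)
        rw [hc, hV]
        push_cast
        rw [← pow_mul, ← pow_mul]
      · simp only [g2, if_neg hh, Finset.sum_const_zero]
        positivity
    refine (Finset.sum_le_sum fun h _ => this h).trans (le_of_eq ?_)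
    rw [Finset.sum_const, nsmul_eq_mul, Finset.card_univ, Fintype.card_fun, hV]
    congr 1
    simp only [Fintype.card_fin]
    push_cast
    rw [← pow_mul]
  refine (Finset.sum_le_sum fun x _ => hpt x).trans ?_
  simp only [Finset.sum_add_distrib]
  linarith

lemma exists_lab (n : ℕ) : ∃ lab : Fin n → Fin 5, 
    (∀ k, k ≠ 4 → (univ.filter fun i => lab i = k).card = n / 4) ∧ (univ.filter fun i => lab i = 4).card ≤ 3 := by
  have hc : Fintype.card (Fin n) = Fintype.card ((Fin 4 × Fin (n / 4)) ⊕ Fin (n % 4)) := by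
    simp; omega
  let E := Fintype.equivOfCardEq hc
  let L : (Fin 4 × Fin (n / 4)) ⊕ Fin (n % 4) → Fin 5 := Sum.elim (fun a => Fin.castSucc a.1) (fun _ => 4)
  have hk : ∀ k, (univ.filter fun i => L (E i) = k).card = (univ.filter fun y => L y = k).card := by
    intro k
    rw [← Finset.card_map E.toEmbedding]
    congr 1
    ext y
    simp only [mem_map_equiv, mem_filter, mem_univ, true_and]
    simp
  have hs : ∀ k, (univ.filter fun y => L y = k).card = (univ.filter fun a : Fin 4 × Fin (n / 4) => Fin.castSucc a.1 = k).card
      + (univ.filter fun _ : Fin (n % 4) => (4 : Fin 5) = k).card := by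
    intro k
    rw [← Finset.card_map (Function.Embedding.inl : _ ↪ (Fin 4 × Fin (n / 4)) ⊕ Fin (n % 4)),
      ← Finset.card_map (s := univ.filter fun _ : Fin (n % 4) => (4 : Fin 5) = k) (Function.Embedding.inr : _ ↪ (Fin 4 × Fin (n / 4)) ⊕ Fin (n % 4)),
      ← Finset.card_union_of_disjoint]
    · congr 1
      ext y
      rcases y with y | y <;> by_cases hk5 : (4 : Fin 5) = k <;> simp [L, hk5]
    · rw [Finset.disjoint_left]
      intro y hy hy'
      rcases y with y | y <;> simp at hy hy'
  have hl4 : n % 4 < 4 := Nat.mod_lt _ (by norm_num)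
  refine ⟨fun i => L (E i), ?_, ?_⟩
  · intro k hk4
    rw [hk, hs]
    obtain ⟨k', rfl⟩ : ∃ k' : Fin 4, Fin.castSucc k' = k := by
      refine ⟨⟨k, ?_⟩, by ext; simp⟩
      have := k.2
      have : (k : ℕ) ≠ 4 := fun h => hk4 (Fin.ext h)
      omega
    have h2 : (univ.filter fun a : Fin 4 × Fin (n / 4) => Fin.castSucc a.1 = Fin.castSucc k') = ({k'} : Finset (Fin 4)) ×ˢ univ := by
      ext ⟨a, b⟩; simp [eq_comm]
    rw [h2, Finset.card_product]
    have h3 : (univ.filter fun _ : Fin (n % 4) => (4 : Fin 5) = Fin.castSucc k') = ∅ := by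
      rw [Finset.filter_eq_empty_iff]; intro _ _ h; exact hk4 h.symm
    rw [h3]; simp
  · rw [hk, hs]
    have h2 : (univ.filter fun a : Fin 4 × Fin (n / 4) => Fin.castSucc a.1 = (4 : Fin 5)) = ∅ := by
      rw [Finset.filter_eq_empty_iff]; intro a _ h
      have := a.1.2
      have h' := congrArg Fin.val h
      simp at h'; omega
    rw [h2]
    simp; omega

end dims



section numerics

lemma num_B (L : ℝ) (hL : 100 ≤ L) (m n e q : ℕ) (hm : m = 1 ∨ m = 2) (hq : q = n / 4)
    (he : L * e ≤ n / 2000) (hn : 10 ^ 6 * L ≤ n) :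
    3 * (Real.exp L ^ (2 * m)) ^ (n - 2 * (2 * q)) * ((16 / (3 / 2) ^ 12) ^ (2 * q) * (Real.exp L ^ (2 * m)) ^ (2 * q + 2 * e + e))
      ≤ Real.exp (m * n * L - L - 2) := by
  have h4 : n ≤ 4 * q + 3 := by omega
  have h4' : 4 * q ≤ n := by omega
  have h5 : n - 2 * (2 * q) ≤ 3 := by omega
  have hE1 : 1 ≤ Real.exp L := Real.one_le_exp (by linarith)
  have h4R : (n : ℝ) ≤ 4 * q + 3 := by exact_mod_cast h4
  have h4R' : 4 * (q : ℝ) ≤ n := by exact_mod_cast h4'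
  have c1 : (16 / (3 / 2) ^ 12 : ℝ) ^ (2 * q) ≤ Real.exp (-(2 * (2 * q))) := by
    have : (16 / (3 / 2) ^ 12 : ℝ) ≤ Real.exp (-2) := by
      rw [Real.exp_neg, le_inv_comm₀ (by norm_num) (Real.exp_pos _)]
      have : Real.exp 2 = Real.exp 1 * Real.exp 1 := by rw [← Real.exp_add]; norm_num
      rw [this]
      have := Real.exp_one_lt_d9
      have h0 := Real.exp_pos 1
      nlinarith
    calc _ ≤ (Real.exp (-2)) ^ (2 * q) := pow_le_pow_left₀ (by norm_num) this _
      _ = _ := by rw [← Real.exp_nat_mul]; push_cast; congr 1; ring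
  have c2 : (Real.exp L ^ (2 * m)) ^ (n - 2 * (2 * q)) ≤ (Real.exp L ^ (2 * m)) ^ 3 :=
    pow_le_pow_right₀ (one_le_pow₀ hE1) h5
  have c3 : (3 : ℝ) ≤ Real.exp 2 := by have := Real.add_one_le_exp (2 : ℝ); linarith
  have hLn : L * n ≥ 0 := by positivity
  calc _ ≤ Real.exp 2 * (Real.exp L ^ (2 * m)) ^ 3 * (Real.exp (-(2 * (2 * q))) * (Real.exp L ^ (2 * m)) ^ (2 * q + 2 * e + e)) := by
        gcongr
    _ = Real.exp (2 + 6 * m * L - 2 * (2 * q) + 2 * m * (2 * q + 2 * e + e) * L) := by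
        simp only [← Real.exp_nat_mul, ← Real.exp_add]
        congr 1; push_cast; ring
    _ ≤ _ := by
        apply Real.exp_le_exp.2
        rcases hm with rfl | rfl <;> push_cast <;> nlinarith

lemma num_C (L : ℝ) (hL : 100 ≤ L) (m n e q : ℕ) (hm : m = 1 ∨ m = 2) (hq : q = n / 4)
    (he : L * e ≤ n / 2000) (hn : 10 ^ 6 * L ≤ n) :
    Real.exp L ^ (3 * (2 * m) * (2 * m)) * 
         (2 ^ n * Real.exp L ^ (2 * m * (6 * e) + q * (2 * (2 * m) - 1) + 3 * (2 * m)))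
      ≤ Real.exp (m * n * L - L - 2) := by
  have h4 : n ≤ 4 * q + 3 := by omega
  have h4' : 4 * q ≤ n := by omega
  have h4R : (n : ℝ) ≤ 4 * q + 3 := by exact_mod_cast h4
  have h4R' : 4 * (q : ℝ) ≤ n := by exact_mod_cast h4'
  have c1 : (2 : ℝ) ^ n ≤ Real.exp n := by
    have : (2 : ℝ) ≤ Real.exp 1 := by have := Real.add_one_le_exp (1 : ℝ); linarith
    calc _ ≤ Real.exp 1 ^ n := pow_le_pow_left₀ (by norm_num) this _
      _ = _ := by rw [← Real.exp_nat_mul, mul_one]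
  have c2 : ((2 * (2 * m) - 1 : ℕ) : ℝ) = 4 * m - 1 := by
    rcases hm with rfl | rfl <;> norm_num
  calc _ ≤ Real.exp L ^ (3 * (2 * m) * (2 * m)) * 
         (Real.exp n * Real.exp L ^ (2 * m * (6 * e) + q * (2 * (2 * m) - 1) + 3 * (2 * m))) := by gcongr
    _ = Real.exp (12 * m * m * L + n + (12 * m * e + q * (4 * m - 1) + 6 * m) * L) := by
        simp only [← Real.exp_nat_mul, ← Real.exp_add]
        congr 1; push_cast [c2]; ring
    _ ≤ _ := by
        apply Real.exp_le_exp.2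
        have a1 : 4 * (q : ℝ) * L ≤ n * L := by nlinarith
        have a2 : (n : ℝ) * L ≤ (4 * q + 3) * L := by nlinarith
        have a3 : 100 * (n : ℝ) ≤ n * L := by nlinarith [show (0 : ℝ) ≤ n by positivity]
        rcases hm with rfl | rfl <;> push_cast <;> nlinarith

lemma num_D (L : ℝ) (hL : 100 ≤ L) (m n e : ℕ) (hm : m = 1 ∨ m = 2)
    (he : L * e ≤ n / 2000) (hn : 10 ^ 6 * L ≤ n) :
    Real.exp L ^ (2 * m * (2 * m)) *
         ((4 ^ (6 * e + 3) * (5 / 4) ^ n) * (Real.exp L ^ (2 * m * (6 * e + 3 + 1)) *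
        Real.exp L ^ (m * n) * (3 / 4) ^ (n - (6 * e + 3))))
      ≤ Real.exp (m * n * L - L - 2) := by
  have he' : 100 * (e : ℝ) ≤ n / 2000 := by nlinarith [show (0 : ℝ) ≤ e by positivity]
  have hk : 6 * e + 3 ≤ n := by
    have : ((6 * e + 3 : ℕ) : ℝ) ≤ n := by push_cast; nlinarith
    exact_mod_cast this
  obtain ⟨k, hkd⟩ : ∃ k, k = 6 * e + 3 := ⟨_, rfl⟩
  rw [← hkd] at hk ⊢
  have c1 : (4 : ℝ) ^ k ≤ Real.exp (2 * k) := by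
    have h2 : (2 : ℝ) ≤ Real.exp 1 := by have := Real.add_one_le_exp (1 : ℝ); linarith
    have : (4 : ℝ) ≤ Real.exp 2 := by
      have : Real.exp 2 = Real.exp 1 * Real.exp 1 := by rw [← Real.exp_add]; norm_num
      nlinarith
    calc _ ≤ Real.exp 2 ^ k := pow_le_pow_left₀ (by norm_num) this _
      _ = _ := by rw [← Real.exp_nat_mul, mul_comm]
  have c2 : (5 / 4 : ℝ) ^ n * (3 / 4) ^ (n - k) ≤ Real.exp (-(n / 16)) * Real.exp k := by
    have e1 : (5 / 4 : ℝ) ^ n * (3 / 4) ^ (n - k) = (15 / 16) ^ n * (4 / 3) ^ k := by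
      obtain ⟨j, rfl⟩ := Nat.exists_eq_add_of_le hk
      rw [Nat.add_sub_cancel_left, pow_add, pow_add (15 / 16 : ℝ), mul_assoc, ← mul_pow]
      have : (5 / 4 : ℝ) ^ k = (15 / 16) ^ k * (4 / 3) ^ k := by rw [← mul_pow]; norm_num
      rw [this]; norm_num; ring
    rw [e1]
    have h1 : (15 / 16 : ℝ) ≤ Real.exp (-(1 / 16)) := by
      have := Real.add_one_le_exp (-(1 / 16) : ℝ); linarith
    have h2 : (4 / 3 : ℝ) ≤ Real.exp 1 := by
      have := Real.add_one_le_exp (1 : ℝ); linarith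
    have h3 := pow_le_pow_left₀ (by norm_num) h1 n
    have h4 := pow_le_pow_left₀ (by norm_num) h2 k
    rw [← Real.exp_nat_mul] at h3 h4
    rw [mul_one] at h4
    have : (n : ℝ) * -(1 / 16) = -(n / 16) := by ring
    rw [this] at h3
    gcongr
  have hkR : (k : ℝ) = 6 * e + 3 := by rw [hkd]; push_cast; ring
  calc _ = Real.exp L ^ (2 * m * (2 * m)) *
         (4 ^ k * (Real.exp L ^ (2 * m * (k + 1)) *
        Real.exp L ^ (m * n) * ((5 / 4) ^ n * (3 / 4) ^ (n - k)))) := by ring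
    _ ≤ Real.exp L ^ (2 * m * (2 * m)) *
         (Real.exp (2 * k) * (Real.exp L ^ (2 * m * (k + 1)) *
        Real.exp L ^ (m * n) * (Real.exp (-(n / 16)) * Real.exp k))) := by gcongr
    _ = Real.exp (4 * m * m * L + 2 * k + (2 * m * (k + 1)) * L + m * n * L - n / 16 + k) := by
        simp only [← Real.exp_nat_mul, ← Real.exp_add]
        congr 1; push_cast; ring
    _ ≤ _ := by
        apply Real.exp_le_exp.2
        rw [hkR]
        rcases hm with rfl | rfl <;> push_cast <;> nlinarith

variable {p : ℕ} [Fact p.Prime] {V : Type*} [AddCommGroup V] [Module (ZMod p) V] [Fintype V]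

set_option maxHeartbeats 1000000 in
open Classical in
theorem noniso_small (hp : 2 < p) (B : LinearMap.BilinForm (ZMod p) V) (hnd : B.Nondegenerate)
    (hsymm : ∀ x y, B x y = B y x)
    (hB : ∀ y, (∀ x, B x y = 0) → y = 0) (m : ℕ) (hm : m = 1 ∨ m = 2) (hd : Module.finrank (ZMod p) V = 2 * m)
    (n : ℕ) (f : (Fin n → V) → ℝ) (hf0 : ∀ x, 0 ≤ f x) (hf : Dom B f)
    (hL : 100 ≤ Real.log p) (hn : 10 ^ 20 * Real.log p ^ 4 ≤ n) :
    ∑ x : Fin n → V, (if Iso B x then 0 else f x) ≤ (p : ℝ) ^ (m * n) / p := by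
  obtain ⟨lab, hq, h4⟩ := exists_lab n
  have hp0 : (0 : ℝ) < p := by have := (Fact.out : p.Prime).pos; exact_mod_cast this
  have hV : Fintype.card V = p ^ (2 * m) := by
    rw [Module.card_eq_pow_finrank (K := ZMod p), ZMod.card, hd]
  set L := Real.log p with hLd
  have hpL : (p : ℝ) = Real.exp L := (Real.exp_log hp0).symm
  have hLpos : 0 < L := by linarith
  set e := ⌊(n : ℝ) / (2000 * L)⌋₊ with he
  have he1 : (e : ℝ) ≤ n / (2000 * L) := Nat.floor_le (by positivity)
  have he2 : (n : ℝ) / (2000 * L) < e + 1 := Nat.lt_floor_add_one _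
  have hL2 : L ^ 2 ≥ 10000 := by nlinarith
  have hL3 : L ^ 3 ≥ 1000000 := by
    have : L ^ 3 = L ^ 2 * L := by ring
    nlinarith
  have hL4 : L ^ 4 = L ^ 3 * L := by ring
  have hnL : 10 ^ 6 * L ≤ n := by nlinarith
  have hn3 : 10 ^ 20 * L ^ 3 ≤ n := by nlinarith
  have hLe : L * e ≤ n / 2000 := by
    rw [le_div_iff₀ (by positivity)] at he1
    linarith
  have heL : n ≤ 4000 * L * e := by
    rw [div_lt_iff₀ (by positivity)] at he2
    nlinarith
  have hebig : 10 ^ 10 * L ≤ e := by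
    have : 4000 * L * (10 ^ 10 * L) ≤ 4000 * L * e := by nlinarith
    exact le_of_mul_le_mul_left this (by positivity)
  have hepos : (0 : ℝ) < e := by nlinarith
  have hm2 : (m : ℝ) ≤ 2 := by rcases hm with rfl | rfl <;> norm_num
  have hm1 : (1 : ℝ) ≤ m := by rcases hm with rfl | rfl <;> norm_num
  have hn0 : (0 : ℝ) < n := by nlinarith
  have key := noniso_sum hp B hnd hsymm hB m hd f hf0 hf lab (n / 4) (fun k hk => by convert hq k hk) (by convert h4)
    (4 * m * n * L) (e / (16 * 4 ^ 12)) (by positivity) 12 e e ?_ ?_ ?_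
  rotate_left
  · have h1 : 4 * m * n * L * (16 * 4 ^ 12) ≤ e * e := by
      have h2 : (n : ℝ) * n ≤ (4000 * L * e) * (4000 * L * e) := mul_le_mul heL heL hn0.le (by positivity)
      have h3 : (10 ^ 20 * L ^ 3) * n ≤ (4000 * L * e) * (4000 * L * e) := by nlinarith
      have h4 : L ^ 2 * (4 * m * n * L * (16 * 4 ^ 12)) ≤ L ^ 2 * (e * e) := by
        have : (m : ℝ) * (n * L ^ 3) ≤ 2 * (n * L ^ 3) := mul_le_mul_of_nonneg_right hm2 (by positivity)
        nlinarith [show (0 : ℝ) ≤ n * L ^ 3 by positivity]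
      exact le_of_mul_le_mul_left h4 (by positivity)
    rw [← mul_div_assoc, le_div_iff₀ (by positivity)]
    exact h1
  · apply le_of_eq; field_simp
  · rw [hV, Nat.cast_pow, hpL, ← Real.exp_nat_mul, ← Real.exp_add]
    rw [Real.exp_lt_one_iff]
    push_cast
    nlinarith
  refine le_trans (le_of_eq (by congr!)) (key.trans ?_)
  simp only [Fintype.card_fin]
  rw [hV, Nat.cast_pow, hpL]
  have tB := num_B L hL m n e (n / 4) hm rfl hLe hnL
  have tC := num_C L hL m n e (n / 4) hm rfl hLe hnL
  have tD := num_D L hL m n e hm hLe hnL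
  have tA : 3 * (Real.exp L ^ (2 * m)) ^ (n - 2 * (2 * (n / 4))) * ((Real.exp L ^ (2 * m)) ^ (2 * (2 * (n / 4))) * Real.exp (-(4 * m * n * L) / 2))
     ≤ Real.exp (m * n * L - L - 2) := by
    have : n - 2 * (2 * (n / 4)) + 2 * (2 * (n / 4)) = n := by omega
    rw [mul_assoc, ← mul_assoc ((Real.exp L ^ (2 * m)) ^ (n - 2 * (2 * (n / 4)))), ← pow_add, this]
    have c3 : (3 : ℝ) ≤ Real.exp 2 := by have := Real.add_one_le_exp (2 : ℝ); linarith
    calc _ ≤ Real.exp 2 * ((Real.exp L ^ (2 * m)) ^ n * Real.exp (-(4 * m * n * L) / 2)) := by gcongr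
      _ = Real.exp 2 := by
        simp only [← Real.exp_nat_mul, ← Real.exp_add]
        congr 1; push_cast; ring
      _ ≤ _ := by
        apply Real.exp_le_exp.2
        have : 1 * (n * L) ≤ m * (n * L) := mul_le_mul_of_nonneg_right hm1 (by positivity)
        nlinarith
  have hfin : 4 * Real.exp (m * n * L - L - 2) ≤ Real.exp L ^ (m * n) / Real.exp L := by
    have c4 : (4 : ℝ) ≤ Real.exp 2 := by
      have h2 : (2 : ℝ) ≤ Real.exp 1 := by have := Real.add_one_le_exp (1 : ℝ); linarith
      have : Real.exp 2 = Real.exp 1 * Real.exp 1 := by rw [← Real.exp_add]; norm_num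
      nlinarith
    calc _ ≤ Real.exp 2 * Real.exp (m * n * L - L - 2) := by gcongr
      _ = _ := by
        rw [← Real.exp_nat_mul, ← Real.exp_add, ← Real.exp_sub]
        congr 1; push_cast; ring
  refine le_trans ?_ hfin
  rw [mul_add, mul_add, ← mul_assoc, ← mul_assoc]
  linarith

end numerics



section fourier

set_option linter.unusedSectionVars false

variable {p : ℕ} [Fact p.Prime]

/-- the hyperbolic form. -/
def hyp (p m : ℕ) : LinearMap.BilinForm (ZMod p) ((Fin m → ZMod p) × (Fin m → ZMod p)) :=
  LinearMap.mk₂ (ZMod p) (fun x y => dotProduct x.1 y.2 + dotProduct y.1 x.2)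
    (by intro a b c; simp [add_dotProduct, dotProduct_add]; ring)
    (by intro a b c; simp [smul_dotProduct, dotProduct_smul]; ring)
    (by intro a b c; simp [add_dotProduct, dotProduct_add]; ring)
    (by intro a b c; simp [smul_dotProduct, dotProduct_smul]; ring)

lemma hyp_apply (m : ℕ) (x y : (Fin m → ZMod p) × (Fin m → ZMod p)) :
    hyp p m x y = dotProduct x.1 y.2 + dotProduct y.1 x.2 := rfl

lemma hyp_symm (m : ℕ) (x y : (Fin m → ZMod p) × (Fin m → ZMod p)) : hyp p m x y = hyp p m y x := by
  rw [hyp_apply, hyp_apply, add_comm]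

lemma hyp_nd (m : ℕ) (y : (Fin m → ZMod p) × (Fin m → ZMod p)) (h : ∀ x, hyp p m x y = 0) : y = 0 := by
  ext l
  · have := h (0, Pi.single l 1)
    simpa [hyp_apply] using this
  · have := h (Pi.single l 1, 0)
    simpa [hyp_apply] using this

lemma hyp_nondeg (m : ℕ) : (hyp p m).Nondegenerate :=
  ⟨fun x h => hyp_nd m x fun y => by rw [hyp_symm]; exact h y, fun y h => hyp_nd m y h⟩

lemma hyp_finrank (m : ℕ) : Module.finrank (ZMod p) ((Fin m → ZMod p) × (Fin m → ZMod p)) = 2 * m := by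
  rw [Module.finrank_prod, Module.finrank_fin_fun]; ring

variable {m n : ℕ}

def coef (x : Fin n → (Fin m → ZMod p) × (Fin m → ZMod p)) (i j : Fin n) : ZMod p :=
  if i < j then hyp p m (x i) (x j) else if i = j then dotProduct (x i).1 (x i).2 else 0

def ff (x : Fin n → (Fin m → ZMod p) × (Fin m → ZMod p)) : ℝ := ∏ i, ∏ j, cc (coef x i j)

lemma ff_nonneg (x : Fin n → (Fin m → ZMod p) × (Fin m → ZMod p)) : 0 ≤ ff x :=
  Finset.prod_nonneg fun _ _ => Finset.prod_nonneg fun _ _ => cc_nonneg _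

lemma ff_dom : Dom (hyp p m) (ff : (Fin n → (Fin m → ZMod p) × (Fin m → ZMod p)) → ℝ) := by
  intro x S T hST
  have h1 : ff x = ∏ a : Fin n × Fin n, cc (coef x a.1 a.2) := by
    unfold ff; rw [Fintype.prod_prod_type]
  let g : Fin n × Fin n → Fin n × Fin n := fun a => (min a.1 a.2, max a.1 a.2)
  have hinj : Set.InjOn g ((S ×ˢ T : Finset _) : Set (Fin n × Fin n)) := by
    rintro ⟨a, b⟩ hab ⟨c, d⟩ hcd h
    simp only [Finset.coe_product, Set.mem_prod, Finset.mem_coe] at hab hcd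
    have hne : a ≠ d := fun h => (Finset.disjoint_left.1 hST hab.1) (h ▸ hcd.2)
    have hne2 : c ≠ b := fun h => (Finset.disjoint_left.1 hST hcd.1) (h ▸ hab.2)
    simp only [g, Prod.mk.injEq] at h ⊢
    grind
  have h2 : ∏ i ∈ S, ∏ j ∈ T, cc (hyp p m (x i) (x j)) = ∏ a ∈ (S ×ˢ T).image g, cc (coef x a.1 a.2) := by
    rw [Finset.prod_image hinj, Finset.prod_product]
    refine Finset.prod_congr rfl fun i hi => Finset.prod_congr rfl fun j hj => ?_
    have hne : i ≠ j := fun h => (Finset.disjoint_left.1 hST hi) (h ▸ hj)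
    congr 1
    simp only [g, coef]
    rcases lt_or_gt_of_ne hne with h | h
    · rw [min_eq_left h.le, max_eq_right h.le, if_pos h]
    · rw [min_eq_right h.le, max_eq_left h.le, if_pos h, hyp_symm]
  rw [h1, h2, ← Finset.prod_mul_prod_compl ((S ×ˢ T).image g)]
  exact mul_le_of_le_one_right (Finset.prod_nonneg fun _ _ => cc_nonneg _)
    (Finset.prod_le_one (fun _ _ => cc_nonneg _) fun _ _ => cc_le_one _)

lemma sym_sum (ω : Fin n → Fin n → Bool) (a : Fin n → Fin n → ZMod p) :
    ∑ i, ∑ j, symMat (ZMod p) ω i j * a i j =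
    ∑ i, ∑ j, signb (ZMod p) (ω i j) * (if i < j then a i j + a j i else if i = j then a i i else 0) := by
  have h1 : ∀ i j, symMat (ZMod p) ω i j * a i j =
      (if i < j then signb (ZMod p) (ω i j) * a i j else 0) + (if i = j then signb (ZMod p) (ω i j) * a i j else 0) +
      (if j < i then signb (ZMod p) (ω j i) * a i j else 0) := by
    intro i j
    simp only [symMat, Matrix.of_apply]
    rcases lt_trichotomy i j with h | h | h
    · simp [h, h.le, h.ne, h.not_gt]
    · simp [h]
    · simp [h, h.le, h.ne', h.not_gt]
  simp_rw [h1]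
  simp only [Finset.sum_add_distrib]
  rw [Finset.sum_comm (f := fun i j => if j < i then signb (ZMod p) (ω j i) * a i j else 0)]
  simp only [← Finset.sum_add_distrib]
  refine Finset.sum_congr rfl fun i _ => Finset.sum_congr rfl fun j _ => ?_
  rcases lt_trichotomy i j with h | h | h
  · simp [h, h.ne, mul_add]
  · simp [h]
  · simp [h.ne', h.not_gt]

def expo (lam : ZMod p) (ω : Fin n → Fin n → Bool) (x : Fin n → (Fin m → ZMod p) × (Fin m → ZMod p)) : ZMod p :=
  ∑ i, ∑ j, (symMat (ZMod p) ω - lam • (1 : Matrix (Fin n) (Fin n) (ZMod p))) i j * dotProduct (x i).1 (x j).2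

def phi (lam : ZMod p) (x : Fin n → (Fin m → ZMod p) × (Fin m → ZMod p)) : ℂ :=
  (∑ ω : Fin n → Fin n → Bool, chi (expo lam ω x)) / (Fintype.card (Fin n → Fin n → Bool) : ℂ)

lemma expo_eq (lam : ZMod p) (ω : Fin n → Fin n → Bool) (x : Fin n → (Fin m → ZMod p) × (Fin m → ZMod p)) :
    expo lam ω x = (∑ i, ∑ j, signb (ZMod p) (ω i j) * coef x i j) +
     -(lam * ∑ i, dotProduct (x i).1 (x i).2) := by
  unfold expo
  simp only [Matrix.sub_apply, sub_mul, Finset.sum_sub_distrib]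
  rw [sym_sum, sub_eq_add_neg]
  congr 1
  rw [Finset.mul_sum]
  congr 1
  refine Finset.sum_congr rfl fun i _ => ?_
  simp [Matrix.one_apply]

lemma chi_sum {ι : Type*} (s : Finset ι) (g : ι → ZMod p) : chi (∑ i ∈ s, g i) = ∏ i ∈ s, chi (g i) := by
  classical
  induction s using Finset.induction_on with
  | empty => simp [chi_zero]
  | insert a s ha ih => rw [Finset.sum_insert ha, Finset.prod_insert ha, chi_add, ih]

lemma sum_omega (g : Fin n → Fin n → Bool → ℂ) :
    ∑ ω : Fin n → Fin n → Bool, ∏ i, ∏ j, g i j (ω i j) = ∏ i, ∏ j, ∑ b, g i j b := by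
  have h1 : ∀ i, ∏ j, ∑ b, g i j b = ∑ w : Fin n → Bool, ∏ j, g i j (w j) := by
    intro i
    rw [Finset.prod_univ_sum (fun _ => univ) (fun j b => g i j b), Fintype.piFinset_univ]
  simp_rw [h1]
  rw [Finset.prod_univ_sum (fun _ => univ) (fun i (w : Fin n → Bool) => ∏ j, g i j (w j)), Fintype.piFinset_univ]

lemma norm_phi (lam : ZMod p) (x : Fin n → (Fin m → ZMod p) × (Fin m → ZMod p)) : ‖phi lam x‖ = ff x := by
  unfold phi
  have h1 : ∑ ω : Fin n → Fin n → Bool, chi (expo lam ω x) =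
      (∏ i, ∏ j, (2 * ((chi (coef x i j)).re : ℂ))) * chi (-(lam * ∑ i, dotProduct (x i).1 (x i).2)) := by
    simp_rw [expo_eq, chi_add, chi_sum]
    rw [← Finset.sum_mul, sum_omega (fun i j b => chi (signb (ZMod p) b * coef x i j))]
    congr 1
    refine Finset.prod_congr rfl fun i _ => Finset.prod_congr rfl fun j _ => ?_
    rw [Fintype.sum_bool]
    simp only [signb, if_true, one_mul]
    rw [if_neg (by simp), neg_one_mul, chi_neg, Complex.add_conj]
    push_cast; rfl
  rw [h1, norm_div, norm_mul, chi_norm, mul_one, norm_prod]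
  simp only [norm_prod, norm_mul, Complex.norm_real, Complex.norm_natCast]
  simp only [Finset.prod_mul_distrib]
  simp [ff, cc]

lemma phi_zero (lam : ZMod p) (x : Fin n → (Fin m → ZMod p) × (Fin m → ZMod p)) (hx : ∀ i, (x i).1 = 0) :
    phi lam x = 1 := by
  unfold phi expo
  simp [hx, chi_zero]

/-- vectors kernel condition -/
def Ker (lam : ZMod p) (ω : Fin n → Fin n → Bool) (v : Fin n → Fin m → ZMod p) : Prop :=
  ∀ l, Matrix.mulVec (symMat (ZMod p) ω - lam • (1 : Matrix (Fin n) (Fin n) (ZMod p))) (fun j => v j l) = 0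

open Classical in
lemma fourier_ker (lam : ZMod p) (ω : Fin n → Fin n → Bool) (v : Fin n → Fin m → ZMod p) :
    ∑ u : Fin n → Fin m → ZMod p, chi (expo lam ω (fun i => (u i, v i))) =
      if Ker lam ω v then ((p : ℂ) ^ (m * n)) else 0 := by
  set M := (symMat (ZMod p) ω - lam • (1 : Matrix (Fin n) (Fin n) (ZMod p))) with hM
  let Lf : (Fin n → Fin m → ZMod p) →ₗ[ZMod p] ZMod p :=
    { toFun := fun u => expo lam ω (fun i => (u i, v i))
      map_add' := by
        intro a b
        simp [expo, add_dotProduct, mul_add, Finset.sum_add_distrib]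
      map_smul' := by
        intro c a
        simp only [expo, Pi.smul_apply, smul_dotProduct, RingHom.id_apply, smul_eq_mul, Finset.mul_sum]
        refine Finset.sum_congr rfl fun i _ => Finset.sum_congr rfl fun j _ => ?_
        ring }
  have hLf : ∀ u, Lf u = ∑ i, ∑ l, u i l * Matrix.mulVec M (fun j => v j l) i := by
    intro u
    show expo lam ω (fun i => (u i, v i)) = _
    simp only [expo, Matrix.mulVec, dotProduct, ← hM]
    refine Finset.sum_congr rfl fun i _ => ?_
    simp only [Finset.mul_sum]
    rw [Finset.sum_comm]
    refine Finset.sum_congr rfl fun i _ => Finset.sum_congr rfl fun j _ => ?_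
    ring
  show ∑ u, chi (Lf u) = _
  by_cases hK : Ker lam ω v
  · rw [if_pos hK]
    have : ∀ u, Lf u = 0 := by
      intro u; rw [hLf]
      refine Finset.sum_eq_zero fun i _ => Finset.sum_eq_zero fun l _ => ?_
      have := congrFun (hK l) i
      rw [this]; simp
    simp only [this, chi_zero]
    simp
    rw [← pow_mul]
  · rw [if_neg hK]
    apply sum_chi_linear
    intro h0
    apply hK
    intro l
    funext i
    have := LinearMap.congr_fun h0 (Pi.single i (Pi.single l 1))
    rw [hLf] at this
    rw [Finset.sum_eq_single i, Finset.sum_eq_single l] at this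
    · simpa using this
    · intro l' _ hl; simp [hl]
    · simp
    · intro i' _ hi; simp [hi]
    · simp

/-- expectation -/
def Ex (g : (Fin n → Fin n → Bool) → ℝ) : ℝ := (∑ ω, g ω) / (Fintype.card (Fin n → Fin n → Bool) : ℝ)

open Classical in
lemma moment (lam : ZMod p) (P : Finset (Fin n → Fin m → ZMod p)) :
    ((Ex (fun ω : Fin n → Fin n → Bool => ((P.filter fun v => Ker lam ω v).card : ℝ)) : ℝ) : ℂ) * (p : ℂ) ^ (m * n) =
      ∑ v ∈ P, ∑ u : Fin n → Fin m → ZMod p, phi lam (fun i => (u i, v i)) := by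
  have h1 : ∀ ω : Fin n → Fin n → Bool, (((P.filter fun v => Ker lam ω v).card : ℝ) : ℂ) * (p : ℂ) ^ (m * n) =
      ∑ v ∈ P, ∑ u : Fin n → Fin m → ZMod p, chi (expo lam ω (fun i => (u i, v i))) := by
    intro ω
    simp_rw [fourier_ker]
    rw [← Finset.sum_filter, Finset.sum_const, nsmul_eq_mul]
    simp
  unfold Ex phi
  push_cast
  rw [div_mul_eq_mul_div, Finset.sum_mul]
  push_cast at h1
  simp_rw [h1]
  simp_rw [← Finset.sum_div]
  congr 1
  rw [Finset.sum_comm]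
  refine Finset.sum_congr rfl fun v _ => ?_
  rw [Finset.sum_comm]

open Classical in
lemma moment_bound (hp : 2 < p) (lam : ZMod p) (P : Finset (Fin n → Fin m → ZMod p)) (hm : m = 1 ∨ m = 2)
    (hL : 100 ≤ Real.log p) (hn : 10 ^ 20 * Real.log p ^ 4 ≤ n) :
    ‖((Ex (fun ω : Fin n → Fin n → Bool => ((P.filter fun v => Ker lam ω v).card : ℝ)) : ℝ) : ℂ) * (p : ℂ) ^ (m * n) -
      ∑ v ∈ P, ∑ u ∈ univ.filter (fun u : Fin n → Fin m → ZMod p => Iso (hyp p m) (fun i => (u i, v i))),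
        phi lam (fun i => (u i, v i))‖ ≤ (p : ℝ) ^ (m * n) / p := by
  rw [moment, ← Finset.sum_sub_distrib]
  have h1 : ∀ v : Fin n → Fin m → ZMod p, ∑ u : Fin n → Fin m → ZMod p, phi lam (fun i => (u i, v i)) -
      ∑ u ∈ univ.filter (fun u : Fin n → Fin m → ZMod p => Iso (hyp p m) (fun i => (u i, v i))),
        phi lam (fun i => (u i, v i)) = ∑ u : Fin n → Fin m → ZMod p, 
          if Iso (hyp p m) (fun i => (u i, v i)) then 0 else phi lam (fun i => (u i, v i)) := by
    intro v
    rw [Finset.sum_filter, ← Finset.sum_sub_distrib]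
    refine Finset.sum_congr rfl fun u _ => ?_
    split_ifs <;> simp
  simp_rw [h1]
  have key := noniso_small hp (hyp p m) (hyp_nondeg m) (hyp_symm m) (hyp_nd m) m hm (hyp_finrank m) n ff ff_nonneg
    ff_dom hL hn
  refine le_trans ?_ key
  refine (norm_sum_le _ _).trans ?_
  have h2 : ∑ x : Fin n → (Fin m → ZMod p) × (Fin m → ZMod p), (if Iso (hyp p m) x then 0 else ff x) =
      ∑ v : Fin n → Fin m → ZMod p, ∑ u : Fin n → Fin m → ZMod p, 
        if Iso (hyp p m) (fun i => (u i, v i)) then 0 else ff (fun i => (u i, v i)) := by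
    rw [Finset.sum_comm, ← Fintype.sum_prod_type']
    rw [← Equiv.sum_comp (Equiv.arrowProdEquivProdArrow (Fin n) (fun _ => Fin m → ZMod p) (fun _ => Fin m → ZMod p)).symm]
    rfl
  rw [h2]
  refine (Finset.sum_le_sum_of_subset_of_nonneg (Finset.subset_univ P) fun _ _ _ => norm_nonneg _).trans ?_
  refine Finset.sum_le_sum fun v _ => ?_
  refine (norm_sum_le _ _).trans ?_
  refine Finset.sum_le_sum fun u _ => ?_
  split_ifs
  · simp
  · rw [norm_phi]

end fourier



section final

variable {p : ℕ} [Fact p.Prime] {n : ℕ}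

lemma Ex_mono {g h : (Fin n → Fin n → Bool) → ℝ} (H : ∀ ω, g ω ≤ h ω) : Ex g ≤ Ex h := by
  unfold Ex
  exact div_le_div_of_nonneg_right (Finset.sum_le_sum fun ω _ => H ω) (by positivity)

lemma Ex_lin (a b : ℝ) (g h : (Fin n → Fin n → Bool) → ℝ) :
    Ex (fun ω => a * g ω + b * h ω) = a * Ex g + b * Ex h := by
  unfold Ex
  rw [Finset.sum_add_distrib, ← Finset.mul_sum, ← Finset.mul_sum]
  ring

open Classical in
def Pone (p n : ℕ) [Fact p.Prime] : Finset (Fin n → Fin 1 → ZMod p) := univ.filter fun v => v ≠ 0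

open Classical in
def Ptwo (p n : ℕ) [Fact p.Prime] : Finset (Fin n → Fin 2 → ZMod p) :=
  univ.filter fun v => (fun j => v j 0) ≠ 0 ∧ ∀ c : ZMod p, (fun j => v j 1) ≠ c • (fun j => v j 0)

lemma iso_one (hp : 2 < p) (u v : Fin n → Fin 1 → ZMod p) (hv : v ≠ 0)
    (h : Iso (hyp p 1) (fun i => (u i, v i))) : u = 0 := by
  have h2 := two_ne_zero_zmod hp
  obtain ⟨j, hj⟩ : ∃ j, v j 0 ≠ 0 := by
    by_contra! hc
    apply hv
    funext j l
    rw [Subsingleton.elim l 0]; exact hc j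
  have hh : ∀ i k, u i 0 * v k 0 + u k 0 * v i 0 = 0 := by
    intro i k
    have := h i k
    simpa [hyp_apply, dotProduct] using this
  have huj : u j 0 = 0 := by
    have := hh j j
    rw [← two_mul] at this
    rcases mul_eq_zero.1 this with h | h
    · exact absurd h h2
    · exact (mul_eq_zero.1 h).resolve_right hj
  funext i l
  rw [Subsingleton.elim l 0]
  have := hh i j
  rw [huj, zero_mul, add_zero] at this
  exact (mul_eq_zero.1 this).resolve_right hj

open Classical in
lemma moment_one (hp : 2 < p) (lam : ZMod p)
    (hL : 100 ≤ Real.log p) (hn : 10 ^ 20 * Real.log p ^ 4 ≤ n) :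
    |Ex (fun ω : Fin n → Fin n → Bool => (((Pone p n).filter fun v => Ker lam ω v).card : ℝ)) -
      (1 - 1 / (p : ℝ) ^ n)| ≤ 1 / p := by
  have h := moment_bound hp lam (Pone p n) (Or.inl rfl) hL hn
  have hp0 : (0 : ℝ) < p := by have := (Fact.out : p.Prime).pos; exact_mod_cast this
  have h1 : ∑ v ∈ Pone p n, ∑ u ∈ univ.filter (fun u : Fin n → Fin 1 → ZMod p => Iso (hyp p 1) (fun i => (u i, v i))),
        phi lam (fun i => (u i, v i)) = (((p : ℝ) ^ n - 1 : ℝ) : ℂ) := by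
    have h2 : ∀ v ∈ Pone p n, ∑ u ∈ univ.filter (fun u : Fin n → Fin 1 → ZMod p => Iso (hyp p 1) (fun i => (u i, v i))),
        phi lam (fun i => (u i, v i)) = 1 := by
      intro v hv
      have hv' : v ≠ 0 := by simpa [Pone] using hv
      have : univ.filter (fun u : Fin n → Fin 1 → ZMod p => Iso (hyp p 1) (fun i => (u i, v i))) = {0} := by
        ext u
        rw [mem_filter, mem_singleton]
        refine ⟨fun hu => iso_one hp u v hv' hu.2, ?_⟩
        rintro rfl
        refine ⟨mem_univ _, fun i j => ?_⟩
        simp [hyp_apply]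
      rw [this, Finset.sum_singleton]
      exact phi_zero _ _ (fun i => rfl)
    rw [Finset.sum_congr rfl h2]
    have hc : (Pone p n).card = p ^ n - 1 := by
      have : Pone p n = univ.erase 0 := by ext v; simp [Pone]
      rw [this, Finset.card_erase_of_mem (mem_univ _), Finset.card_univ]
      simp
    rw [Finset.sum_const, hc, nsmul_eq_mul, mul_one]
    rw [Nat.cast_sub (Nat.one_le_pow _ _ (Fact.out : p.Prime).pos)]
    push_cast; rfl
  rw [h1, one_mul] at h
  set E := Ex (fun ω : Fin n → Fin n → Bool => (((Pone p n).filter fun v => Ker lam ω v).card : ℝ)) with hE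
  have h3 : ((E : ℝ) : ℂ) * (p : ℂ) ^ n - (((p : ℝ) ^ n - 1 : ℝ) : ℂ) = ((E * (p : ℝ) ^ n - ((p : ℝ) ^ n - 1) : ℝ) : ℂ) := by
    push_cast; ring
  rw [h3, Complex.norm_real, Real.norm_eq_abs] at h
  have hpn : (0 : ℝ) < (p : ℝ) ^ n := by positivity
  have h4 : E - (1 - 1 / (p : ℝ) ^ n) = (E * (p : ℝ) ^ n - ((p : ℝ) ^ n - 1)) / (p : ℝ) ^ n := by
    field_simp
  rw [h4, abs_div, abs_of_pos hpn, div_le_iff₀ hpn]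
  calc _ ≤ _ := h
    _ = _ := by ring

lemma iso_two (v : Fin n → Fin 2 → ZMod p) (hv : v ∈ Ptwo p n) :
    ∃ i j, v i 0 * v j 1 - v j 0 * v i 1 ≠ 0 := by
  simp only [Ptwo, mem_filter, mem_univ, true_and] at hv
  obtain ⟨h1, h2⟩ := hv
  obtain ⟨i, hi⟩ : ∃ i, v i 0 ≠ 0 := by
    by_contra! hc
    exact h1 (funext hc)
  by_contra! hc
  apply h2 (v i 1 / v i 0)
  funext j
  have := hc i j
  simp only [Pi.smul_apply, smul_eq_mul]
  field_simp
  linear_combination this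

lemma two_solve (a b c d x y : ZMod p) (h : a * d - c * b ≠ 0) (h1 : x * a + y * b = 0) (h2 : x * c + y * d = 0) :
    x = 0 ∧ y = 0 := by
  constructor
  · have : (a * d - c * b) * x = 0 := by linear_combination d * h1 - b * h2
    exact (mul_eq_zero.1 this).resolve_left h
  · have : (a * d - c * b) * y = 0 := by linear_combination a * h2 - c * h1
    exact (mul_eq_zero.1 this).resolve_left h

open Classical in
lemma iso_two_card (hp : 2 < p) (v : Fin n → Fin 2 → ZMod p) (hv : v ∈ Ptwo p n) :
    (univ.filter (fun u : Fin n → Fin 2 → ZMod p => Iso (hyp p 2) (fun i => (u i, v i)))).card ≤ p := by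
  have h2 := two_ne_zero_zmod hp
  obtain ⟨i, j, hij⟩ := iso_two v hv
  have hc : Fintype.card (ZMod p) = p := ZMod.card p
  refine le_trans ?_ hc.le
  rw [← Finset.card_univ]
  refine Finset.card_le_card_of_injOn (fun u => u i 0 * v j 0 + u i 1 * v j 1) (fun _ _ => by simp) ?_
  intro u hu w hw huw
  simp only [Finset.coe_filter, mem_univ, true_and, Set.mem_setOf_eq] at hu hw huw
  have eu : ∀ a b, (u a 0 * v b 0 + u a 1 * v b 1) + (u b 0 * v a 0 + u b 1 * v a 1) = 0 := by
    intro a b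
    have := hu a b
    simpa [hyp_apply, dotProduct] using this
  have ew : ∀ a b, (w a 0 * v b 0 + w a 1 * v b 1) + (w b 0 * v a 0 + w b 1 * v a 1) = 0 := by
    intro a b
    have := hw a b
    simpa [hyp_apply, dotProduct] using this
  have ez : ∀ a b, ((u a 0 - w a 0) * v b 0 + (u a 1 - w a 1) * v b 1) + ((u b 0 - w b 0) * v a 0 + (u b 1 - w b 1) * v a 1) = 0 := by
    intro a b; linear_combination eu a b - ew a b
  have ed : ∀ a, (u a 0 - w a 0) * v a 0 + (u a 1 - w a 1) * v a 1 = 0 := by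
    intro a
    have := ez a a
    rw [← two_mul] at this
    exact (mul_eq_zero.1 this).resolve_left h2
  have ei : (u i 0 - w i 0) * v j 0 + (u i 1 - w i 1) * v j 1 = 0 := by linear_combination huw
  obtain ⟨i0, i1⟩ := two_solve _ _ _ _ _ _ hij (ed i) ei
  have ej : (u j 0 - w j 0) * v i 0 + (u j 1 - w j 1) * v i 1 = 0 := by
    have := ez i j; rw [i0, i1] at this; simpa using this
  obtain ⟨j0, j1⟩ := two_solve _ _ _ _ _ _ hij ej (ed j)
  funext k l
  have k1 : (u k 0 - w k 0) * v i 0 + (u k 1 - w k 1) * v i 1 = 0 := by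
    have := ez k i; rw [i0, i1] at this; simpa using this
  have k2 : (u k 0 - w k 0) * v j 0 + (u k 1 - w k 1) * v j 1 = 0 := by
    have := ez k j; rw [j0, j1] at this; simpa using this
  obtain ⟨k0, k1'⟩ := two_solve _ _ _ _ _ _ hij k1 k2
  fin_cases l
  · exact sub_eq_zero.1 k0
  · exact sub_eq_zero.1 k1'

lemma ff_le_one {m : ℕ} (x : Fin n → (Fin m → ZMod p) × (Fin m → ZMod p)) : ff x ≤ 1 := by
  simpa using ff_dom x ∅ ∅ (by simp)

open Classical in
lemma moment_two (hp : 2 < p) (lam : ZMod p)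
    (hL : 100 ≤ Real.log p) (hn : 10 ^ 20 * Real.log p ^ 4 ≤ n) :
    Ex (fun ω : Fin n → Fin n → Bool => (((Ptwo p n).filter fun v => Ker lam ω v).card : ℝ)) ≤ p + 1 / p := by
  have h := moment_bound hp lam (Ptwo p n) (Or.inr rfl) hL hn
  have hp0 : (0 : ℝ) < p := by have := (Fact.out : p.Prime).pos; exact_mod_cast this
  set E := Ex (fun ω : Fin n → Fin n → Bool => (((Ptwo p n).filter fun v => Ker lam ω v).card : ℝ)) with hE
  have h1 : ‖∑ v ∈ Ptwo p n, ∑ u ∈ univ.filter (fun u : Fin n → Fin 2 → ZMod p => Iso (hyp p 2) (fun i => (u i, v i))),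
        phi lam (fun i => (u i, v i))‖ ≤ (p : ℝ) ^ (2 * n) * p := by
    refine (norm_sum_le _ _).trans ?_
    have h2 : ∀ v ∈ Ptwo p n, ‖∑ u ∈ univ.filter (fun u : Fin n → Fin 2 → ZMod p => Iso (hyp p 2) (fun i => (u i, v i))),
        phi lam (fun i => (u i, v i))‖ ≤ (p : ℝ) := by
      intro v hv
      refine (norm_sum_le _ _).trans ?_
      refine (Finset.sum_le_sum (g := fun _ => (1 : ℝ)) fun u _ => ?_).trans ?_
      · rw [norm_phi]; exact ff_le_one _
      · rw [Finset.sum_const, nsmul_eq_mul, mul_one]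
        exact_mod_cast iso_two_card hp v hv
    refine (Finset.sum_le_sum h2).trans ?_
    rw [Finset.sum_const, nsmul_eq_mul]
    refine mul_le_mul_of_nonneg_right ?_ hp0.le
    have : (Ptwo p n).card ≤ p ^ (2 * n) := by
      refine (Finset.card_le_univ _).trans (le_of_eq ?_)
      simp [pow_mul]
    exact_mod_cast this
  have h3 : ‖((E : ℝ) : ℂ) * (p : ℂ) ^ (2 * n)‖ ≤ (p : ℝ) ^ (2 * n) / p + (p : ℝ) ^ (2 * n) * p := by
    have := norm_add_le _ _ |>.trans (add_le_add h h1)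
    rwa [sub_add_cancel] at this
  have h4 : ((E : ℝ) : ℂ) * (p : ℂ) ^ (2 * n) = ((E * (p : ℝ) ^ (2 * n) : ℝ) : ℂ) := by push_cast; ring
  rw [h4, Complex.norm_real, Real.norm_eq_abs] at h3
  have h5 := (le_abs_self _).trans h3
  have hpn : (0 : ℝ) < (p : ℝ) ^ (2 * n) := by positivity
  refine le_of_mul_le_mul_right (h5.trans (le_of_eq ?_)) hpn
  ring

open Classical in
lemma ker_counts (lam : ZMod p) (ω : Fin n → Fin n → Bool) :
    ((p : ℝ) - 1) * (if (symMat (ZMod p) ω - lam • (1 : Matrix (Fin n) (Fin n) (ZMod p))).det = 0 then 1 else 0) ≤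
      (((Pone p n).filter fun v => Ker lam ω v).card : ℝ) ∧
    (((Pone p n).filter fun v => Ker lam ω v).card : ℝ) ≤
     ((p : ℝ) - 1) * (if (symMat (ZMod p) ω - lam • (1 : Matrix (Fin n) (Fin n) (ZMod p))).det = 0 then 1 else 0) +
      1 / ((p : ℝ) ^ 2 - p) * (((Ptwo p n).filter fun v => Ker lam ω v).card : ℝ) := by
  set M := symMat (ZMod p) ω - lam • (1 : Matrix (Fin n) (Fin n) (ZMod p)) with hM
  set KS : Finset (Fin n → ZMod p) := univ.filter fun w => M.mulVec w = 0 with hKS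
  have hK0 : (0 : Fin n → ZMod p) ∈ KS := by simp [hKS]
  have hp2 := (Fact.out : p.Prime).two_le
  obtain ⟨k, hk⟩ : ∃ k, KS.card = p ^ k := by
    refine ⟨Module.finrank (ZMod p) (LinearMap.ker M.mulVecLin), ?_⟩
    have h1 := Module.card_eq_pow_finrank (K := ZMod p) (V := LinearMap.ker M.mulVecLin)
    rw [ZMod.card] at h1
    rw [← h1, Fintype.card_subtype]
    congr 1
    ext w
    simp [hKS]
  have hN : ((Pone p n).filter fun v => Ker lam ω v).card = KS.card - 1 := by
    rw [← Finset.card_erase_of_mem hK0]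
    refine Finset.card_nbij' (fun v j => v j 0) (fun w j _ => w j) ?_ ?_ ?_ ?_
    · intro v hv
      simp only [Pone, coe_filter, mem_filter, mem_univ, true_and, Set.mem_setOf_eq] at hv
      simp only [coe_erase, Set.mem_diff, mem_coe, hKS, mem_filter, mem_univ, true_and, Set.mem_singleton_iff]
      refine ⟨hv.2 0, fun h => hv.1 ?_⟩
      funext j l
      rw [Subsingleton.elim l 0]; exact congrFun h j
    · intro w hw
      simp only [coe_erase, Set.mem_diff, mem_coe, hKS, mem_filter, mem_univ, true_and, Set.mem_singleton_iff] at hw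
      simp only [Pone, coe_filter, mem_filter, mem_univ, true_and, Set.mem_setOf_eq]
      refine ⟨fun h => hw.2 ?_, fun l => hw.1⟩
      funext j
      exact congrFun (congrFun h j) 0
    · intro v _
      funext j l
      rw [Subsingleton.elim l 0]
    · intro w _
      rfl
  have hN2 : (KS.card - 1) * (KS.card - p) ≤ ((Ptwo p n).filter fun v => Ker lam ω v).card := by
    have h1 : ((KS.erase 0).sigma (fun v => KS.filter fun w => ∀ c : ZMod p, w ≠ c • v)).card ≤
        ((Ptwo p n).filter fun v => Ker lam ω v).card := by
      refine Finset.card_le_card_of_injOn (fun a j => ![a.1 j, a.2 j]) ?_ ?_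
      · rintro ⟨v, w⟩ hvw
        simp only [mem_coe, Finset.mem_sigma, mem_erase, mem_filter, hKS, mem_univ, true_and] at hvw
        simp only [mem_coe, mem_filter, Ptwo, mem_univ, true_and]
        refine ⟨⟨?_, ?_⟩, ?_⟩
        · simpa using hvw.1.1
        · simpa using hvw.2.2
        · intro l
          fin_cases l
          · simpa using hvw.1.2
          · simpa using hvw.2.1
      · rintro ⟨v, w⟩ _ ⟨v', w'⟩ _ h
        have h1 : v = v' := by
          funext j; exact congrFun (congrFun h j) 0
        have h2 : w = w' := by
          funext j; exact congrFun (congrFun h j) 1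
        rw [h1, h2]
    refine le_trans ?_ h1
    rw [Finset.card_sigma, ← Finset.card_erase_of_mem hK0, ← smul_eq_mul, ← Finset.sum_const]
    refine Finset.sum_le_sum fun v hv => ?_
    have h3 : KS ⊆ (KS.filter fun w => ∀ c : ZMod p, w ≠ c • v) ∪ univ.image (fun c : ZMod p => c • v) := by
      intro w hw
      rw [mem_union, mem_filter]
      by_cases hc : ∀ c : ZMod p, w ≠ c • v
      · exact Or.inl ⟨hw, hc⟩
      · push Not at hc
        obtain ⟨c, hc⟩ := hc
        exact Or.inr (mem_image.2 ⟨c, mem_univ _, hc.symm⟩)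
    have h4 := (Finset.card_le_card h3).trans (Finset.card_union_le _ _)
    have h5 : (univ.image (fun c : ZMod p => c • v)).card ≤ p := by
      refine Finset.card_image_le.trans ?_
      rw [Finset.card_univ, ZMod.card]
    omega
  have hsing : M.det = 0 ↔ 1 < KS.card := by
    rw [← Matrix.exists_mulVec_eq_zero_iff, Finset.one_lt_card_iff_nontrivial]
    constructor
    · rintro ⟨v, hv, hv2⟩
      exact ⟨v, by simp [hKS, hv2], 0, hK0, hv⟩
    · intro h
      obtain ⟨v, hv, hv2⟩ := h.exists_ne 0
      exact ⟨v, hv2, by simpa [hKS] using hv⟩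
  have hpR : (2 : ℝ) ≤ p := by exact_mod_cast hp2
  have hpp : (0 : ℝ) < (p : ℝ) ^ 2 - p := by nlinarith
  rw [hN]
  rcases Nat.eq_zero_or_pos k with hk0 | hk0
  · have hK1 : KS.card = 1 := by rw [hk, hk0, pow_zero]
    have : ¬ M.det = 0 := by rw [hsing, hK1]; simp
    rw [if_neg this, hK1]
    simp
    positivity
  · have hKp : p ≤ KS.card := by
      rw [hk]; exact Nat.le_self_pow (by omega) p
    have : M.det = 0 := by rw [hsing]; omega
    rw [if_pos this, mul_one, Nat.cast_sub (by omega)]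
    have hKpR : (p : ℝ) ≤ KS.card := by exact_mod_cast hKp
    push_cast
    refine ⟨by linarith, ?_⟩
    have hN2R : ((KS.card : ℝ) - 1) * (KS.card - p) ≤ (((Ptwo p n).filter fun v => Ker lam ω v).card : ℝ) := by
      have := (Nat.cast_le (α := ℝ)).2 hN2
      rwa [Nat.cast_mul, Nat.cast_sub (by omega), Nat.cast_sub hKp, Nat.cast_one] at this
    have h6 : (KS.card : ℝ) - p ≤ 1 / ((p : ℝ) ^ 2 - p) * (((KS.card : ℝ) - 1) * (KS.card - p)) := by
      rw [one_div, ← div_eq_inv_mul, le_div_iff₀ hpp]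
      rcases Nat.lt_or_ge k 2 with hk2 | hk2
      · have : k = 1 := by omega
        rw [hk, this]; simp
      · have : p ^ 2 ≤ KS.card := by rw [hk]; exact Nat.pow_le_pow_right (by omega) hk2
        have : (p : ℝ) ^ 2 ≤ KS.card := by exact_mod_cast this
        nlinarith
    have h7 := mul_le_mul_of_nonneg_left hN2R (show (0 : ℝ) ≤ 1 / ((p : ℝ) ^ 2 - p) by positivity)
    linarith

open Classical in
lemma main_bound (hp : 2 < p) (lam : ZMod p)
    (hL : 100 ≤ Real.log p) (hn : 10 ^ 20 * Real.log p ^ 4 ≤ n) :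
    |prob (fun ω : Fin n → Fin n → Bool =>
      (symMat (ZMod p) ω - lam • (1 : Matrix (Fin n) (Fin n) (ZMod p))).det = 0) - 1 / (p : ℝ)| ≤ 10 / (p : ℝ) ^ 2 := by
  have m1 := moment_one hp lam hL hn
  have m2 := moment_two hp lam hL hn
  set ind : (Fin n → Fin n → Bool) → ℝ := fun ω =>
    (if (symMat (ZMod p) ω - lam • (1 : Matrix (Fin n) (Fin n) (ZMod p))).det = 0 then 1 else 0) with hind
  set N1 : (Fin n → Fin n → Bool) → ℝ := fun ω => (((Pone p n).filter fun v => Ker lam ω v).card : ℝ) with hN1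
  set N2 : (Fin n → Fin n → Bool) → ℝ := fun ω => (((Ptwo p n).filter fun v => Ker lam ω v).card : ℝ) with hN2
  have hprob : prob (fun ω : Fin n → Fin n → Bool =>
      (symMat (ZMod p) ω - lam • (1 : Matrix (Fin n) (Fin n) (ZMod p))).det = 0) = Ex ind := by
    unfold prob Ex
    congr 1
    rw [hind, Finset.sum_boole]
    congr!
  rw [hprob]
  have k1 : ((p : ℝ) - 1) * Ex ind ≤ Ex N1 := by
    have := Ex_mono (g := fun ω => ((p : ℝ) - 1) * ind ω + 0 * ind ω) (h := N1) (fun ω => by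
      have := (ker_counts lam ω).1
      simp only [zero_mul, add_zero]
      exact this)
    rw [Ex_lin] at this
    linarith
  have k2 : Ex N1 ≤ ((p : ℝ) - 1) * Ex ind + 1 / ((p : ℝ) ^ 2 - p) * Ex N2 := by
    rw [← Ex_lin]
    exact Ex_mono fun ω => (ker_counts lam ω).2
  have hpR : (3 : ℝ) ≤ p := by exact_mod_cast hp
  have hn1 : n ≠ 0 := by
    rintro rfl
    have : 0 < Real.log p ^ 4 := by positivity
    simp at hn
    linarith
  have hpn : 1 / (p : ℝ) ^ n ≤ 1 / p := by
    apply one_div_le_one_div_of_le (by linarith)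
    exact le_self_pow₀ (by linarith) hn1
  have hpn0 : 0 ≤ 1 / (p : ℝ) ^ n := by positivity
  rw [abs_le] at m1
  generalize Ex ind = I at *
  generalize Ex N1 = A at *
  generalize Ex N2 = D at *
  generalize (1 / (p : ℝ) ^ n) = z at *
  generalize (p : ℝ) = P at *
  have hP0 : 0 < P := by linarith
  have hPP : 0 < P ^ 2 - P := by nlinarith
  have a1 : 1 / P * P = 1 := by field_simp
  set y := 1 / P with hy
  have hy0 : 0 < y := by positivity
  have hy3 : y ≤ 1 / 3 := by
    rw [hy]; apply one_div_le_one_div_of_le (by norm_num) hpR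
  have hten : 10 / P ^ 2 = 10 * y ^ 2 := by rw [hy]; field_simp
  have hD : 1 / (P ^ 2 - P) * D ≤ 1 / (P ^ 2 - P) * (P + y) := mul_le_mul_of_nonneg_left m2 (by positivity)
  have hD2 : 1 / (P ^ 2 - P) * (P + y) ≤ 3 * y := by
    rw [one_div, ← div_eq_inv_mul, div_le_iff₀ hPP]
    have e : 3 * y * (P ^ 2 - P) = 3 * P - 3 := by linear_combination (3 * P - 3) * a1
    rw [e]; linarith
  rw [hten, abs_le]
  have hP1 : 0 < P - 1 := by linarith
  constructor
  · have : (P - 1) * (y - 10 * y ^ 2) ≤ (P - 1) * I := by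
      have e : (P - 1) * (y - 10 * y ^ 2) = 1 - 11 * y + 10 * y ^ 2 := by
        linear_combination (1 - 10 * y) * a1
      rw [e]; nlinarith
    have := le_of_mul_le_mul_left this hP1
    linarith
  · have : (P - 1) * I ≤ (P - 1) * (y + 10 * y ^ 2) := by
      have e : (P - 1) * (y + 10 * y ^ 2) = 1 + 9 * y - 10 * y ^ 2 := by
        linear_combination (1 + 10 * y) * a1
      rw [e]; nlinarith
    have := le_of_mul_le_mul_left this hP1
    linarith

end final

/-- Singularity probability of `M_n - λ I_n` over `F_p` is `1/p + O(1/p²) +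
O(exp(-η n / log p))` for primes `2 < p ≤ exp(η n^{1/4})`. -/
theorem singularity_probability_symmetric_rademacher :
    ∃ η C : ℝ, 0 < η ∧ 0 < C ∧
      ∀ n p : ℕ, p.Prime → 2 < p →
        (p : ℝ) ≤ Real.exp (η * (n : ℝ) ^ ((1 : ℝ) / 4)) →
        ∀ lam : ZMod p,
          |prob (fun ω : Fin n → Fin n → Bool =>
              (symMat (ZMod p) ω - lam • (1 : Matrix (Fin n) (Fin n) (ZMod p))).det = 0) -
            1 / (p : ℝ)|
          ≤ C / (p : ℝ) ^ 2 + C * Real.exp (-η * n / Real.log p) := by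
  refine ⟨1 / 10 ^ 5, Real.exp 200 + 10, by norm_num, by positivity, ?_⟩
  intro n p hpr hp hpn lam
  haveI : Fact p.Prime := ⟨hpr⟩
  have hp0 : (0 : ℝ) < p := by exact_mod_cast hpr.pos
  have hC : (0 : ℝ) ≤ (Real.exp 200 + 10) * Real.exp (-(1 / 10 ^ 5) * (n : ℝ) / Real.log (p : ℝ)) := by positivity
  by_cases hL : 100 ≤ Real.log p
  · have hlog : Real.log p ≤ 1 / 10 ^ 5 * (n : ℝ) ^ ((1 : ℝ) / 4) := by
      rw [Real.log_le_iff_le_exp hp0]; exact hpn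
    have h1 : (10 ^ 5 * Real.log p) ^ 4 ≤ ((n : ℝ) ^ ((1 : ℝ) / 4)) ^ 4 := by
      apply pow_le_pow_left₀ (by positivity)
      linarith
    have h2 : ((n : ℝ) ^ ((1 : ℝ) / 4)) ^ 4 = n := by
      rw [← Real.rpow_natCast, ← Real.rpow_mul (by positivity)]
      norm_num
    rw [h2, mul_pow] at h1
    have hn : 10 ^ 20 * Real.log p ^ 4 ≤ n := by
      refine le_trans (le_of_eq ?_) h1
      norm_num
    refine (main_bound hp lam hL hn).trans ?_
    have : 10 / (p : ℝ) ^ 2 ≤ (Real.exp 200 + 10) / (p : ℝ) ^ 2 := by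
      apply div_le_div_of_nonneg_right _ (by positivity)
      linarith [Real.exp_pos 200]
    linarith
  · push Not at hL
    have hpe : (p : ℝ) ≤ Real.exp 100 := by
      rw [← Real.log_le_iff_le_exp hp0]; exact hL.le
    have h1 : (p : ℝ) ^ 2 ≤ Real.exp 200 := by
      calc (p : ℝ) ^ 2 ≤ Real.exp 100 ^ 2 := pow_le_pow_left₀ hp0.le hpe 2
        _ = Real.exp 200 := by rw [← Real.exp_nat_mul]; norm_num
    have h2 : 1 ≤ (Real.exp 200 + 10) / (p : ℝ) ^ 2 := by
      rw [le_div_iff₀ (by positivity)]; linarith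
    have h3 : ∀ (E : (Fin n → Fin n → Bool) → Prop), 0 ≤ prob E ∧ prob E ≤ 1 := by
      intro E
      unfold prob
      refine ⟨by positivity, div_le_one_of_le₀ ?_ (by positivity)⟩
      exact_mod_cast Finset.card_le_univ _
    obtain ⟨h4, h5⟩ := h3 (fun ω : Fin n → Fin n → Bool =>
              (symMat (ZMod p) ω - lam • (1 : Matrix (Fin n) (Fin n) (ZMod p))).det = 0)
    have h6 : 1 / (p : ℝ) ≤ 1 := by
      rw [div_le_one hp0]
      have : 1 ≤ p := hpr.pos
      exact_mod_cast this
    have h7 : 0 ≤ 1 / (p : ℝ) := by positivity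
    have : |prob (fun ω : Fin n → Fin n → Bool =>
              (symMat (ZMod p) ω - lam • (1 : Matrix (Fin n) (Fin n) (ZMod p))).det = 0) - 1 / (p : ℝ)| ≤ 1 := by
      rw [abs_le]; constructor <;> linarith
    linarith
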